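/- arXiv:1807.10784 — 6 statements merged into one kernel-verified Lean document; each statement's English description precedes it below -/
import Mathlib

section
/- In ℤ[u_1,u_2,…], for every partition λ and every integer p ≥ 0, the Pieri rule u_p · s_λ(u) = Σ_μ s_μ(u) holds, where the sum is over all partitions μ containing λ with |μ| = |λ| + p such that μ/λ is a horizontal strip. -/
/-!
The Pieri rule follows from two facts, with `n = L + 1` and `D(μ) = schurU n μ` for arbitrary
`μ : ℕ → ℕ`, not only for partitions.

* *Expansion* (`uvar_mul_schurU_eq_sum`): since `λ` vanishes at the last index `L`,
  `u_p D(λ) = ∑ D(λ + k)`, the sum over all `k` supported on `{0, …, L}` with `∑ k_i = p`.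
  Indeed the right side is the coefficient of `t ^ p` in the determinant whose column `j` is
  `c_j = (∑_k u_{λ_i + j - i + k} t ^ k)_i`. As `c_j - t c_{j+1} = (u_{λ_i + j - i})_i`, column
  operations make all columns but the last one constant in `t`. The last row becomes
  `(0, …, 0, ∑_k u_k t ^ k)`, and expanding along it gives `(∑_k u_k t ^ k) D(λ)`.
* *Cancellation* (`sum_not_strip_eq_zero`): the terms for which `(λ + k)/λ` is not a horizontal
  strip cancel. For such a `k`, let `i` be the largest index with `(λ + k)_{i+1} > λ_i`;
  exchanging the rows `i` and `i + 1` of the determinant replaces `μ = λ + k` by the sequence with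
  `(μ_i, μ_{i+1})` changed to `(μ_{i+1} - 1, μ_i + 1)`. This is a sign-reversing involution of the
  remaining `k`.
-/

/-!
STATEMENT 1: In `ℤ[u_1, u_2, …]`, for every partition `λ` and every `p ≥ 0`, the Pieri rule
`u_p · s_λ(u) = Σ_μ s_μ(u)` holds, the sum being over all partitions `μ ⊇ λ` with
`|μ| = |λ| + p` such that `μ/λ` is a horizontal strip.
-/

open MvPolynomial

/-- The variables `u_p` of `ℤ[u_1, u_2, …]`, with `u_0 = 1` and `u_p = 0` for `p < 0`. -/
noncomputable def uvar : ℤ → MvPolynomial ℕ ℤ := fun p =>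
  if p < 0 then 0 else if p = 0 then 1 else X p.toNat

/-- The Schur polynomial `s_λ(u) = det(u_{λ_i + j - i})_{1 ≤ i,j ≤ L}` attached to a
partition `λ` (given as a weakly decreasing function `ℕ → ℕ`, 0-indexed) and a size `L`
(any `L` at least the length of `λ` gives the same polynomial). -/
noncomputable def schurU (L : ℕ) (lam : ℕ → ℕ) : MvPolynomial ℕ ℤ :=
  Matrix.det (Matrix.of fun i j : Fin L => uvar ((lam i : ℤ) + (j : ℕ) - (i : ℕ)))

open Finset in
/-- The coefficient of `t ^ p` in a determinant of power series, expanded by multilinearity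
in the rows. -/
lemma coeff_det_mk {R : Type*} [CommRing R] {n : ℕ} (A : Fin n → Fin n → ℕ → R) (p : ℕ) :
    PowerSeries.coeff p (Matrix.det (Matrix.of fun i j => PowerSeries.mk (A i j))) =
      ∑ k ∈ finsuppAntidiag (univ : Finset (Fin n)) p,
        Matrix.det (Matrix.of fun i j => A i j (k i)) := by
  rw [← Matrix.det_transpose, Matrix.det_apply, map_sum]
  have h : ∀ k : Fin n →₀ ℕ, Matrix.det (Matrix.of fun i j => A i j (k i)) =
      ∑ σ : Equiv.Perm (Fin n), Equiv.Perm.sign σ • ∏ i, A i (σ i) (k i) := by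
    intro k
    rw [← Matrix.det_transpose, Matrix.det_apply]
    simp
  simp_rw [h]
  rw [Finset.sum_comm]
  refine Finset.sum_congr rfl fun σ _ => ?_
  rw [← Finset.smul_sum]
  simp only [Units.smul_def, map_zsmul, Matrix.transpose_apply, Matrix.of_apply,
    PowerSeries.coeff_prod, PowerSeries.coeff_mk]

lemma det_eq_of_row_zero {R : Type*} [CommRing R] {n : ℕ}
    (M : Matrix (Fin (n + 1)) (Fin (n + 1)) R) (h : ∀ j : Fin n, M 0 j.succ = 0) :
    M.det = M 0 0 * (M.submatrix Fin.succ Fin.succ).det := by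
  rw [Matrix.det_succ_row_zero, Fin.sum_univ_succ]
  simp [h]

lemma uvar_neg {p : ℤ} (h : p < 0) : uvar p = 0 := by simp [uvar, h]

lemma uvar_zero : uvar 0 = 1 := by simp [uvar]

/-- Generating function in `t` of the expansion `u_p D(λ) = ∑ D(λ + k)`. -/
lemma det_powerSeries (lam : ℕ → ℕ) (L : ℕ) (hL : lam L = 0) :
    Matrix.det (Matrix.of fun i j : Fin (L + 1) =>
      PowerSeries.mk fun k => uvar ((lam i : ℤ) + (j : ℕ) - (i : ℕ) + k)) =
    (PowerSeries.mk fun k => uvar k) * PowerSeries.C (schurU (L + 1) lam) := by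
  unfold schurU
  -- Reversing rows and columns turns the last row into row `0` and column `j + 1` into column
  -- `j - 1`, the form that the column-operation lemma requires.
  rw [← Matrix.det_submatrix_equiv_self Fin.revPerm,
    ← Matrix.det_submatrix_equiv_self Fin.revPerm (Matrix.of fun i j : Fin (L + 1) =>
      uvar ((lam i : ℤ) + (j : ℕ) - (i : ℕ)))]
  set E : Matrix (Fin (L + 1)) (Fin (L + 1)) (MvPolynomial ℕ ℤ) :=
    (Matrix.of fun i j : Fin (L + 1) => uvar ((lam i : ℤ) + (j : ℕ) - (i : ℕ))).submatrix
      Fin.revPerm Fin.revPerm with hE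
  set A : Matrix (Fin (L + 1)) (Fin (L + 1)) (PowerSeries (MvPolynomial ℕ ℤ)) :=
    (Matrix.of fun i j : Fin (L + 1) =>
      PowerSeries.mk fun k => uvar ((lam i : ℤ) + (j : ℕ) - (i : ℕ) + k)).submatrix
      Fin.revPerm Fin.revPerm with hA
  let B : Matrix (Fin (L + 1)) (Fin (L + 1)) (PowerSeries (MvPolynomial ℕ ℤ)) :=
    Matrix.of fun i => Fin.cons (A i 0) fun j => PowerSeries.C (E i j.succ)
  have hAB : A.det = B.det := by
    refine Matrix.det_eq_of_forall_col_eq_smul_add_pred (fun _ => PowerSeries.X)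
      (fun i => by simp [B]) fun i j => ?_
    ext1 k
    rcases k with _ | k
    · simp [B, A, E]
    · simp only [B, A, E, Matrix.of_apply, Fin.cons_succ, Matrix.submatrix_apply,
        Fin.revPerm_apply, PowerSeries.coeff_mk, map_add, PowerSeries.coeff_succ_X_mul,
        PowerSeries.coeff_C, if_neg (Nat.succ_ne_zero k), zero_add]
      congr 1
      have := j.2
      simp only [Fin.val_rev, Fin.val_succ, Fin.val_castSucc]
      push_cast
      omega
  have hE0 : ∀ j : Fin L, E 0 j.succ = 0 := by
    intro j
    have := j.2
    apply uvar_neg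
    simp only [Fin.revPerm_apply, Fin.val_rev, Fin.val_succ, Fin.val_zero]
    simp [hL]
    omega
  have hE00 : E 0 0 = 1 := by
    simp [E, hL, uvar_zero]
  have hA00 : A 0 0 = PowerSeries.mk fun k => uvar k := by
    simp [A, hL]
  have hminor : B.submatrix Fin.succ Fin.succ =
      (PowerSeries.C (R := MvPolynomial ℕ ℤ)).mapMatrix (E.submatrix Fin.succ Fin.succ) := by
    ext1 i j
    simp [B]
  rw [hAB, det_eq_of_row_zero B (fun j => by simp [B, hE0]), det_eq_of_row_zero E hE0, hE00,
    hminor, ← RingHom.map_det, one_mul]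
  simp only [B, Matrix.of_apply, Fin.cons_zero, hA00]

open Finset in
/-- `u_p D(λ)` is the sum of `D(λ + k)` over all compositions `k` of `p` with `L + 1` parts, the
zero parts allowed. -/
lemma uvar_mul_schurU_eq_sum (lam : ℕ → ℕ) (L : ℕ) (hL : lam L = 0) (p : ℕ) :
    uvar p * schurU (L + 1) lam =
      ∑ k ∈ piAntidiag (range (L + 1)) p, schurU (L + 1) (lam + k) := by
  have h := congrArg (PowerSeries.coeff p) (det_powerSeries lam L hL)
  rw [coeff_det_mk, PowerSeries.coeff_mul_C, PowerSeries.coeff_mk] at h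
  rw [← h]
  refine Finset.sum_bij' (fun k _ x => if hx : x < L + 1 then k ⟨x, hx⟩ else 0)
    (fun k _ => Finsupp.equivFunOnFinite.symm fun x => k x) ?_ ?_ ?_ ?_ ?_
  · intro k hk
    simp only [mem_finsuppAntidiag, subset_univ, and_true] at hk
    rw [mem_piAntidiag, Finset.sum_range]
    refine ⟨by simpa [Fin.is_le] using hk, fun i hi => ?_⟩
    by_contra hc
    simp only [mem_range] at hc
    simp [hc] at hi
  · intro k hk
    rw [mem_piAntidiag, Finset.sum_range] at hk
    simpa using hk.1
  · intro k _
    ext x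
    simp [Fin.is_le]
  · intro k hk
    rw [mem_piAntidiag] at hk
    funext x
    by_cases hx : x < L + 1
    · simp [hx]
    · have : k x = 0 := by
        by_contra hc
        exact hx (mem_range.1 (hk.2 x hc))
      simp [hx, this]
  · intro k _
    unfold schurU
    congr 2
    funext i j
    congr 1
    simp [Fin.is_le]
    ring

/-- Exchanging two adjacent rows of the determinant. -/
lemma schurU_swap (n : ℕ) (mu nu : ℕ → ℕ) (i : ℕ) (hi : i + 1 < n)
    (h1 : nu i + 1 = mu (i + 1)) (h2 : nu (i + 1) = mu i + 1)
    (h3 : ∀ j, j ≠ i → j ≠ i + 1 → nu j = mu j) :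
    schurU n mu + schurU n nu = 0 := by
  let a : Fin n := ⟨i, by omega⟩
  let b : Fin n := ⟨i + 1, hi⟩
  have hab : a ≠ b := by simp [a, b]
  have key : (Matrix.of fun i j : Fin n => uvar ((nu i : ℤ) + (j : ℕ) - (i : ℕ))) =
      (Matrix.of fun i j : Fin n => uvar ((mu i : ℤ) + (j : ℕ) - (i : ℕ))).submatrix
        (Equiv.swap a b) id := by
    ext1 x y
    simp only [Matrix.of_apply, Matrix.submatrix_apply, id]
    congr 1
    rcases eq_or_ne x a with rfl | hxa
    · rw [Equiv.swap_apply_left]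
      simp only [a, b]
      omega
    · rcases eq_or_ne x b with rfl | hxb
      · rw [Equiv.swap_apply_right]
        simp only [a, b]
        omega
      · rw [Equiv.swap_apply_of_ne_of_ne hxa hxb, h3]
        · exact fun h => hxa (Fin.ext h)
        · exact fun h => hxb (Fin.ext h)
  unfold schurU
  rw [key, Matrix.det_permute, Equiv.Perm.sign_swap hab]
  simp

/-- The index `i < L` violates the horizontal strip condition for `(λ + k)/λ`. Indices `i ≥ L` are
never violating when `k` is supported on `{0, …, L}`. -/
def IsBad (lam : ℕ → ℕ) (L : ℕ) (k : ℕ → ℕ) (i : ℕ) : Prop :=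
  i < L ∧ lam i < lam (i + 1) + k (i + 1)

open Classical in
/-- The largest index violating the horizontal strip condition (`0` if there is none). -/
noncomputable def lastBad (lam : ℕ → ℕ) (L : ℕ) (k : ℕ → ℕ) : ℕ :=
  Nat.findGreatest (IsBad lam L k) L

/-- The effect on `k` of exchanging the rows `i` and `i + 1` of the determinant `D(λ + k)`.
The subtractions do not truncate when `λ` is weakly decreasing and `i` is a violating index. -/
def swapAt (lam : ℕ → ℕ) (i : ℕ) (k : ℕ → ℕ) : ℕ → ℕ := fun j =>
  if j = i then lam (i + 1) + k (i + 1) - 1 - lam i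
  else if j = i + 1 then lam i + k i + 1 - lam (i + 1) else k j

lemma swapAt_left (lam : ℕ → ℕ) (i : ℕ) (k : ℕ → ℕ) :
    swapAt lam i k i = lam (i + 1) + k (i + 1) - 1 - lam i := by simp [swapAt]

lemma swapAt_right (lam : ℕ → ℕ) (i : ℕ) (k : ℕ → ℕ) :
    swapAt lam i k (i + 1) = lam i + k i + 1 - lam (i + 1) := by simp [swapAt]

lemma swapAt_of_ne (lam : ℕ → ℕ) (i : ℕ) (k : ℕ → ℕ) {j : ℕ} (h1 : j ≠ i) (h2 : j ≠ i + 1) :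
    swapAt lam i k j = k j := by simp [swapAt, h1, h2]

open Finset in
lemma swapAt_mem {lam : ℕ → ℕ} (hlam : Antitone lam) {L i p : ℕ} {k : ℕ → ℕ}
    (hi : IsBad lam L k i) (hk : k ∈ piAntidiag (range (L + 1)) p) :
    swapAt lam i k ∈ piAntidiag (range (L + 1)) p := by
  obtain ⟨hiL, hb⟩ := hi
  have hle : lam (i + 1) ≤ lam i := hlam (Nat.le_succ i)
  rw [mem_piAntidiag] at hk ⊢
  have hmi : i ∈ range (L + 1) := mem_range.2 (by omega)
  have hmi' : i + 1 ∈ (range (L + 1)).erase i := by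
    rw [mem_erase, mem_range]; omega
  refine ⟨?_, fun j hj => ?_⟩
  · rw [← hk.1, ← add_sum_erase _ _ hmi, ← add_sum_erase _ _ hmi', ← add_sum_erase _ k hmi,
      ← add_sum_erase _ k hmi', swapAt_left, swapAt_right]
    have : ∑ x ∈ ((range (L + 1)).erase i).erase (i + 1), swapAt lam i k x =
        ∑ x ∈ ((range (L + 1)).erase i).erase (i + 1), k x := by
      refine sum_congr rfl fun x hx => ?_
      simp only [mem_erase] at hx
      exact swapAt_of_ne _ _ _ hx.2.1 hx.1
    rw [this]
    omega
  · rw [mem_range]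
    by_cases h1 : j = i
    · omega
    · by_cases h2 : j = i + 1
      · omega
      · rw [swapAt_of_ne _ _ _ h1 h2] at hj
        exact mem_range.1 (hk.2 j hj)

lemma swapAt_swapAt {lam : ℕ → ℕ} (hlam : Antitone lam) {L i : ℕ} {k : ℕ → ℕ}
    (hi : IsBad lam L k i) : swapAt lam i (swapAt lam i k) = k := by
  obtain ⟨hiL, hb⟩ := hi
  have hle : lam (i + 1) ≤ lam i := hlam (Nat.le_succ i)
  funext j
  by_cases h1 : j = i
  · subst h1
    rw [swapAt_left, swapAt_right]
    omega
  · by_cases h2 : j = i + 1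
    · subst h2
      rw [swapAt_right, swapAt_left]
      omega
    · rw [swapAt_of_ne _ _ _ h1 h2, swapAt_of_ne _ _ _ h1 h2]

lemma isBad_swapAt {lam : ℕ → ℕ} (hlam : Antitone lam) {L i : ℕ} {k : ℕ → ℕ}
    (hi : IsBad lam L k i) : IsBad lam L (swapAt lam i k) i := by
  refine ⟨hi.1, ?_⟩
  have hle : lam (i + 1) ≤ lam i := hlam (Nat.le_succ i)
  rw [swapAt_right]
  omega

lemma isBad_lastBad {lam : ℕ → ℕ} {L : ℕ} {k : ℕ → ℕ} (h : ∃ i, IsBad lam L k i) :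
    IsBad lam L k (lastBad lam L k) := by
  classical
  obtain ⟨i, hi⟩ := h
  exact Nat.findGreatest_spec hi.1.le hi

/-- The exchange of rows does not move the last violating index: the conditions at larger indices
`j` involve only `k (j + 1)`, which is unchanged. -/
lemma lastBad_swapAt {lam : ℕ → ℕ} (hlam : Antitone lam) {L : ℕ} {k : ℕ → ℕ}
    (h : ∃ i, IsBad lam L k i) :
    lastBad lam L (swapAt lam (lastBad lam L k) k) = lastBad lam L k := by
  classical
  have hb := isBad_lastBad h
  set i := lastBad lam L k with hi
  have hb' := isBad_swapAt hlam hb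
  refine Nat.findGreatest_eq_iff.2 ⟨hb.1.le, fun _ => hb', fun j hj hjL hbad => ?_⟩
  have : IsBad lam L k j := by
    refine ⟨hbad.1, ?_⟩
    have := hbad.2
    rwa [swapAt_of_ne _ _ _ (by omega) (by omega)] at this
  exact Nat.findGreatest_is_greatest (P := IsBad lam L k) hj hjL this

open Finset Classical in
/-- The terms that are not horizontal strips cancel in pairs. -/
lemma sum_not_strip_eq_zero {lam : ℕ → ℕ} (hlam : Antitone lam) (L p : ℕ) :
    ∑ k ∈ (piAntidiag (range (L + 1)) p).filter (fun k => ∃ i, IsBad lam L k i),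
      schurU (L + 1) (lam + k) = 0 := by
  have hpair : ∀ k, (∃ i, IsBad lam L k i) → schurU (L + 1) (lam + k) +
      schurU (L + 1) (lam + swapAt lam (lastBad lam L k) k) = 0 := by
    intro k hk
    obtain ⟨h1, h2⟩ := isBad_lastBad hk
    have hle : lam (lastBad lam L k + 1) ≤ lam (lastBad lam L k) := hlam (Nat.le_succ _)
    refine schurU_swap _ _ _ (lastBad lam L k) (by omega) ?_ ?_ ?_
    · simp only [Pi.add_apply, swapAt_left]
      omega
    · simp only [Pi.add_apply, swapAt_right]
      omega
    · intro j hj hj'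
      simp only [Pi.add_apply, swapAt_of_ne _ _ _ hj hj']
  refine Finset.sum_involution (fun k _ => swapAt lam (lastBad lam L k) k) ?_ ?_ ?_ ?_
  · intro k hk
    exact hpair k (mem_filter.1 hk).2
  · -- A fixed point has `D = -D`, which forces `D = 0`.
    intro k hk hne heq
    have h := hpair k (mem_filter.1 hk).2
    rw [heq] at h
    exact hne (self_eq_neg.1 (eq_neg_of_add_eq_zero_left h))
  · intro k hk
    obtain ⟨hk, hbad⟩ := mem_filter.1 hk
    have hb := isBad_lastBad hbad
    exact mem_filter.2 ⟨swapAt_mem hlam hb hk, _, isBad_swapAt hlam hb⟩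
  · intro k hk
    have hbad := (mem_filter.1 hk).2
    simp only [lastBad_swapAt hlam hbad]
    exact swapAt_swapAt hlam (isBad_lastBad hbad)

/-- Pieri rule for Schur polynomials in `ℤ[u_1, u_2, …]`.
Here `λ` is a partition (0-indexed, weakly decreasing, vanishing from index `L` on) and the
sum runs over all partitions `μ ⊇ λ` with `|μ| = |λ| + p` such that `μ/λ` is a horizontal
strip, i.e. `μ_{i+1} ≤ λ_i` for all `i`.  (All such `μ` vanish from index `L + 1` on, so the
determinants of size `L + 1` compute `s_λ` and all the `s_μ`.) -/
theorem pieri_rule_schur_u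
    (lam : ℕ → ℕ) (hlam : Antitone lam) (L : ℕ) (hL : ∀ i, L ≤ i → lam i = 0) (p : ℕ) :
    uvar p * schurU (L + 1) lam =
      ∑ᶠ mu ∈ {mu : ℕ → ℕ | Antitone mu ∧ (∀ i, lam i ≤ mu i) ∧
          (∀ i, mu (i + 1) ≤ lam i) ∧
          (∑ i ∈ Finset.range (L + 1), mu i) = (∑ i ∈ Finset.range (L + 1), lam i) + p},
        schurU (L + 1) mu := by
  classical
  rw [uvar_mul_schurU_eq_sum lam L (hL L le_rfl) p,
    ← Finset.sum_filter_add_sum_filter_not _ (fun k => ∃ i, IsBad lam L k i),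
    sum_not_strip_eq_zero hlam, zero_add]
  set S := (Finset.piAntidiag (Finset.range (L + 1)) p).filter
    (fun k => ¬ ∃ i, IsBad lam L k i) with hS
  have hinj : Set.InjOn (fun k : ℕ → ℕ => lam + k) S := fun _ _ _ _ h => add_left_cancel h
  have hmem : ∀ k, k ∈ S ↔ (∑ i ∈ Finset.range (L + 1), k i = p ∧ ∀ i, k i ≠ 0 → i < L + 1) ∧
      ¬ ∃ i, i < L ∧ lam i < lam (i + 1) + k (i + 1) := by
    intro k
    rw [hS, Finset.mem_filter, Finset.mem_piAntidiag]
    simp only [Finset.mem_range, IsBad]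
  have hset : {mu : ℕ → ℕ | Antitone mu ∧ (∀ i, lam i ≤ mu i) ∧ (∀ i, mu (i + 1) ≤ lam i) ∧
      (∑ i ∈ Finset.range (L + 1), mu i) = (∑ i ∈ Finset.range (L + 1), lam i) + p} =
      ((S.image fun k => lam + k : Finset (ℕ → ℕ)) : Set (ℕ → ℕ)) := by
    ext mu
    simp only [Set.mem_ofPred_eq, Finset.coe_image, Set.mem_image, Finset.mem_coe, hmem]
    constructor
    · rintro ⟨-, hle, hstrip, hsum⟩
      have hmu : lam + (mu - lam) = mu := by
        funext i
        have := hle i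
        simp only [Pi.add_apply, Pi.sub_apply]
        omega
      refine ⟨mu - lam, ⟨⟨?_, fun i hi => ?_⟩, ?_⟩, hmu⟩
      · have h : ∑ i ∈ Finset.range (L + 1), (lam + (mu - lam)) i =
            (∑ i ∈ Finset.range (L + 1), lam i) + p := by rw [hmu, hsum]
        simp only [Pi.add_apply, Finset.sum_add_distrib] at h
        exact add_left_cancel h
      · -- Beyond `L`, `μ` vanishes because `μ_{i+1} ≤ λ_i = 0` for `i ≥ L`.
        by_contra hc
        obtain ⟨j, rfl⟩ : ∃ j, i = j + 1 := ⟨i - 1, by omega⟩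
        have h1 := hstrip j
        have h2 := hL j (by omega)
        simp only [Pi.sub_apply] at hi
        omega
      · rintro ⟨i, -, hi⟩
        have h1 := hstrip i
        have h2 := hle (i + 1)
        simp only [Pi.sub_apply] at hi
        omega
    · rintro ⟨k, ⟨⟨hsum, hsupp⟩, hgood⟩, rfl⟩
      have hstrip : ∀ i, (lam + k) (i + 1) ≤ lam i := by
        intro i
        by_cases hi : i < L
        · by_contra hc
          exact hgood ⟨i, hi, by simpa using hc⟩
        · have h1 : k (i + 1) = 0 := by
            by_contra hc
            have := hsupp _ hc
            omega
          have h2 := hlam (Nat.le_succ i)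
          simpa [h1] using h2
      have hle : ∀ i, lam i ≤ (lam + k) i := fun i => Nat.le_add_right _ _
      refine ⟨antitone_nat_of_succ_le fun i => (hstrip i).trans (hle i), hle, hstrip, ?_⟩
      simp only [Pi.add_apply, Finset.sum_add_distrib, hsum]
  rw [hset, finsum_mem_coe_finset, Finset.sum_image hinj]
end

section
/- Let λ be a partition of length at most n. In ℤ[x_1,…,x_n], the bialternant identity det(h_{λ_i+j−i}(X_n))_{1≤i,j≤n} · det(x_i^{n−j})_{1≤i,j≤n} = det(x_i^{λ_j+n−j})_{1≤i,j≤n} holds; that is, the Jacobi–Trudi determinant s_λ(X_n) equals the quotient of alternants 𝒜(x^{λ+δ_{n−1}})/𝒜(x^{δ_{n−1}}), where 𝒜(f) := Σ_{ϖ∈S_n} (−1)^{ℓ(ϖ)} ϖ(f) and δ_{n−1} = (n−1,n−2,…,1,0). -/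
/-!
STATEMENT 2: For a partition `λ` of length at most `n`, in `ℤ[x_1, …, x_n]` one has the
bialternant identity
`det(h_{λ_i+j−i}(X_n)) · det(x_i^{n−j}) = det(x_i^{λ_j+n−j})`,
i.e. the Jacobi–Trudi determinant `s_λ(X_n)` equals `𝒜(x^{λ+δ_{n−1}})/𝒜(x^{δ_{n−1}})`.
-/

open MvPolynomial

/-- The complete homogeneous symmetric polynomial `h_p(x_1, …, x_n)`:
the sum of all monomials of degree `p`. -/
noncomputable def hsymm (n p : ℕ) : MvPolynomial (Fin n) ℤ :=
  ∑ d ∈ Finset.Nat.antidiagonalTuple n p, ∏ i : Fin n, X i ^ d i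

/-- `h_p(x_1, …, x_n)` for an integer index `p`, with `h_p = 0` for `p < 0`
(and `h_0 = 1`, as the empty-degree case of `hsymm`). -/
noncomputable def hZ (n : ℕ) (p : ℤ) : MvPolynomial (Fin n) ℤ :=
  if p < 0 then 0 else hsymm n p.toNat

/-! The argument is a matrix factorisation. Write `H(t) = ∑ h_p t^p`, so that
`H(t) = ∏_l (1 - x_l t)⁻¹`, and let `P_k(t) = ∏_{l ≠ k} (1 - x_l t)`, a polynomial of degree less
than `n`. Then `P_k(t) H(t) = (1 - x_k t)⁻¹ = ∑ x_k^m t^m` (`coPoly_mul_hSeries`), and comparing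
coefficients gives `x_k^m = ∑_{a < n} h_{m-a} [t^a] P_k` (`sum_hZ_mul_coeff`). With
`m = λ_i + n - 1 - i` and `a = n - 1 - j` this says that the Jacobi–Trudi matrix times
`C = ([t^{n-1-j}] P_k)_{j,k}` is the transpose of the alternant matrix (`jacobiTrudi_mul_coeffMatrix`).
Hence `det (h_{λ_i+j-i}) * det C = det (x_i^{λ_j+n-1-j})` for every `λ`. For `λ = 0` the first factor
is unitriangular, so `det C` is the Vandermonde determinant. -/

/-- The generating series `∑ x^p t^p` of the powers of `x`. -/
noncomputable def geomSeries {R : Type*} [CommRing R] (x : R) : PowerSeries R :=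
  PowerSeries.mk fun p => x ^ p

lemma one_sub_mul_geomSeries {R : Type*} [CommRing R] (x : R) :
    (1 - PowerSeries.C x * PowerSeries.X) * geomSeries x = 1 := by
  ext m
  rw [sub_mul, one_mul, mul_assoc, map_sub, PowerSeries.coeff_C_mul]
  cases m with
  | zero => simp [geomSeries]
  | succ m =>
    rw [PowerSeries.coeff_succ_X_mul]
    simp [geomSeries, PowerSeries.coeff_one, pow_succ']

/-- The generating series of the `h_p` is a product of geometric series. -/
lemma coeff_prod_geomSeries (n p : ℕ) :
    PowerSeries.coeff p (∏ l : Fin n, geomSeries (X l : MvPolynomial (Fin n) ℤ)) =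
      _root_.hsymm n p := by
  rw [PowerSeries.coeff_prod, _root_.hsymm]
  refine Finset.sum_nbij' (fun d => ⇑d) (fun d => Finsupp.equivFunOnFinite.symm d) ?_ ?_ ?_ ?_ ?_
  · intro d hd
    simpa [Finset.mem_finsuppAntidiag, Finset.Nat.mem_antidiagonalTuple] using hd
  · intro d hd
    simpa [Finset.mem_finsuppAntidiag, Finset.Nat.mem_antidiagonalTuple] using hd
  · intro d _
    ext; simp
  · intro d _
    ext; simp
  · intro d _
    simp [geomSeries]

/-- The polynomial `P_k(t) = ∏_{l ≠ k} (1 - x_l t)`. -/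
noncomputable def coPoly (n : ℕ) (k : Fin n) : Polynomial (MvPolynomial (Fin n) ℤ) :=
  ∏ l ∈ Finset.univ.erase k, (1 - Polynomial.C (X l) * Polynomial.X)

lemma coeff_coPoly_eq_zero {n : ℕ} (k : Fin n) {a : ℕ} (ha : n ≤ a) :
    (coPoly n k).coeff a = 0 := by
  apply Polynomial.coeff_eq_zero_of_natDegree_lt
  have h1 : (coPoly n k).natDegree ≤ ∑ _l ∈ (Finset.univ : Finset (Fin n)).erase k, 1 := by
    refine (Polynomial.natDegree_prod_le _ _).trans (Finset.sum_le_sum fun l _ => ?_)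
    refine (Polynomial.natDegree_sub_le _ _).trans ?_
    simp
  have h2 := k.pos
  simp at h1
  omega

lemma coPoly_mul_hSeries (n : ℕ) (k : Fin n) :
    (coPoly n k : PowerSeries (MvPolynomial (Fin n) ℤ)) *
      ∏ l : Fin n, geomSeries (X l : MvPolynomial (Fin n) ℤ) = geomSeries (X k) := by
  have hcoe : (coPoly n k : PowerSeries (MvPolynomial (Fin n) ℤ)) =
      ∏ l ∈ Finset.univ.erase k, (1 - PowerSeries.C (X l) * PowerSeries.X) := by
    rw [coPoly, ← Polynomial.coeToPowerSeries.ringHom_apply, map_prod]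
    simp
  rw [hcoe, ← Finset.mul_prod_erase Finset.univ _ (Finset.mem_univ k), mul_left_comm,
    ← Finset.prod_mul_distrib, Finset.prod_congr rfl fun l _ => one_sub_mul_geomSeries _,
    Finset.prod_const_one, mul_one]

/-- The coefficient of `t^m` in `P_k(t) H(t) = ∑ x_k^m t^m`. -/
lemma sum_hZ_mul_coeff (n : ℕ) (k : Fin n) (m : ℕ) :
    ∑ a ∈ Finset.range n, hZ n ((m : ℤ) - a) * (coPoly n k).coeff a = X k ^ m := by
  have h := congrArg (PowerSeries.coeff m) (coPoly_mul_hSeries n k)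
  rw [PowerSeries.coeff_mul, Finset.Nat.sum_antidiagonal_eq_sum_range_succ_mk, geomSeries,
    PowerSeries.coeff_mk] at h
  rw [← h]
  -- Both sums have the same support: the summand vanishes for `a ≥ n` and for `a > m`.
  trans ∑ a ∈ Finset.range (n + m + 1), hZ n ((m : ℤ) - a) * (coPoly n k).coeff a
  · refine Finset.sum_subset (Finset.range_mono (by omega)) fun a _ ha => ?_
    rw [coeff_coPoly_eq_zero k (by simpa using ha), mul_zero]
  · symm
    trans ∑ a ∈ Finset.range (m + 1), hZ n ((m : ℤ) - a) * (coPoly n k).coeff a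
    · refine Finset.sum_congr rfl fun a ha => ?_
      have ha' : a ≤ m := by simpa [Nat.lt_succ_iff] using ha
      rw [coeff_prod_geomSeries, Polynomial.coeff_coe, hZ, if_neg (by omega),
        show ((m : ℤ) - a).toNat = m - a by omega, mul_comm]
    · refine Finset.sum_subset (Finset.range_mono (by omega)) fun a _ ha => ?_
      have ha' : m < a := by simpa [Nat.lt_succ_iff] using ha
      rw [hZ, if_pos (by omega), zero_mul]

/-- The matrix `C` whose `(j, k)` entry is the coefficient of `t^{n-1-j}` in `P_k(t)`. -/
noncomputable def coeffMatrix (n : ℕ) : Matrix (Fin n) (Fin n) (MvPolynomial (Fin n) ℤ) :=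
  Matrix.of fun j k => (coPoly n k).coeff (n - 1 - (j : ℕ))

lemma jacobiTrudi_mul_coeffMatrix (n : ℕ) (lam : Fin n → ℕ) :
    (Matrix.of fun i j : Fin n => hZ n ((lam i : ℤ) + (j : ℕ) - (i : ℕ))) * coeffMatrix n =
    (Matrix.of fun i j : Fin n =>
      (X i : MvPolynomial (Fin n) ℤ) ^ (lam j + (n - 1 - (j : ℕ)))).transpose := by
  ext1 i k
  rw [Matrix.mul_apply, Matrix.transpose_apply, Matrix.of_apply, ← sum_hZ_mul_coeff,
    ← Fin.sum_univ_eq_sum_range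
      (fun a => hZ n (((lam i + (n - 1 - (i : ℕ)) : ℕ) : ℤ) - a) * (coPoly n k).coeff a),
    ← Equiv.sum_comp Fin.revPerm]
  refine Finset.sum_congr rfl fun j _ => ?_
  have hi := i.isLt
  have hj := j.isLt
  simp only [Matrix.of_apply, coeffMatrix, Fin.revPerm_apply, Fin.val_rev]
  congr 2 <;> omega

lemma det_jacobiTrudi_mul_det_coeffMatrix (n : ℕ) (lam : Fin n → ℕ) :
    Matrix.det (Matrix.of fun i j : Fin n => hZ n ((lam i : ℤ) + (j : ℕ) - (i : ℕ))) *
      (coeffMatrix n).det =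
    Matrix.det (Matrix.of fun i j : Fin n =>
      (X i : MvPolynomial (Fin n) ℤ) ^ (lam j + (n - 1 - (j : ℕ)))) := by
  rw [← Matrix.det_mul, jacobiTrudi_mul_coeffMatrix, Matrix.det_transpose]

lemma hZ_zero (n : ℕ) : hZ n 0 = 1 := by
  simp [hZ, _root_.hsymm, Finset.Nat.antidiagonalTuple_zero_right]

/-- For `λ = 0` the Jacobi–Trudi matrix `(h_{j-i})` is upper unitriangular. -/
lemma det_jacobiTrudi_zero (n : ℕ) :
    Matrix.det (Matrix.of fun i j : Fin n =>
      hZ n ((((fun _ => 0 : Fin n → ℕ) i : ℕ) : ℤ) + (j : ℕ) - (i : ℕ))) = 1 := by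
  rw [Matrix.det_of_isUpperTriangular]
  · simp [hZ_zero]
  · intro i j hij
    have hij' : (j : ℕ) < i := hij
    rw [Matrix.of_apply, hZ, if_pos]
    simp only [Nat.cast_zero]
    omega

/-- bialternant/Cauchy formula.  Here all matrices are `n × n` with rows
and columns indexed `0, …, n−1`; in 0-indexed terms the column exponents `n − j`
(for `1 ≤ j ≤ n`) become `n − 1 − j` (for `0 ≤ j ≤ n − 1`). -/
theorem jacobiTrudi_det_mul_vandermonde_eq_alternant
    (n : ℕ) (lam : Fin n → ℕ) (hlam : Antitone lam) :
    Matrix.det (Matrix.of fun i j : Fin n => hZ n ((lam i : ℤ) + (j : ℕ) - (i : ℕ))) *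
      Matrix.det (Matrix.of fun i j : Fin n => (X i : MvPolynomial (Fin n) ℤ) ^ (n - 1 - (j : ℕ))) =
    Matrix.det (Matrix.of fun i j : Fin n =>
      (X i : MvPolynomial (Fin n) ℤ) ^ (lam j + (n - 1 - (j : ℕ)))) := by
  have h0 := det_jacobiTrudi_mul_det_coeffMatrix n fun _ => 0
  rw [det_jacobiTrudi_zero, one_mul] at h0
  simp only [zero_add] at h0
  rw [← h0, det_jacobiTrudi_mul_det_coeffMatrix]
end

section
/- Let λ be a partition with conjugate partition λ̃, and let n ≥ ℓ(λ̃) be arbitrary. In ℤ[x_1,…,x_n], the dual Jacobi–Trudi identity holds: det(h_{λ_i+j−i}(X_n))_{1≤i,j≤ℓ(λ)} = det(e_{λ̃_i+j−i}(X_n))_{1≤i,j≤ℓ(λ̃)}. -/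
/-!
The matrices `H = (h_{b-a})` and `E = ((-1)^{a+b} e_{b-a})` of size `N = λ_0 + L` are inverse to each
other, because the generating series `∏ (1 - x_i t)⁻¹` and `∏ (1 - x_i t)` are (`toeplitz_mul`), and
`det H = 1`. Jacobi's complementary minor theorem (`det_complementary_minor`) therefore equates a
minor of `H` with the complementary minor of `E`, up to the sign of the permutation listing the
chosen rows after the remaining ones.

Write `M = λ_0` and let `c` be the conjugate partition. The minor of `H` with rows `p_i = M + i - λ_i`
and columns `M, …, M + L - 1` is `det (h_{λ_i + j - i})`. The rows not chosen are
`q_k = k + c_{M-1-k}` for `k < M` (`exists_complementary_perm`), and the minor of `E` with rows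
`0, …, M - 1` and columns `q_k` is, after reversing the order of rows and columns and transposing,
`det (e_{c_i + j - i})` with the signs `(-1)^{i + q_k}`. Finally `q_k > p_i` exactly when the cell in
row `i` and column `M - 1 - k` lies in the diagram of `λ`, so the permutation has `|λ|` inversions, and
its sign cancels `∏ (-1)^{k + q_k} = (-1)^{|λ|}`.
-/

/-!
STATEMENT 3: For a partition `λ` with conjugate `λ̃` and any `n ≥ ℓ(λ̃)`, in
`ℤ[x_1, …, x_n]` the dual Jacobi–Trudi identity holds:
`det(h_{λ_i+j−i}(X_n))_{1≤i,j≤ℓ(λ)} = det(e_{λ̃_i+j−i}(X_n))_{1≤i,j≤ℓ(λ̃)}`.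
-/

open MvPolynomial

/-- `e_p(x_1, …, x_n)` for an integer index, with `e_p = 0` for `p < 0`
(and `e_p = 0` for `p > n`, `e_0 = 1`, as for `MvPolynomial.esymm`). -/
noncomputable def eZ (n : ℕ) (p : ℤ) : MvPolynomial (Fin n) ℤ :=
  if p < 0 then 0 else MvPolynomial.esymm (Fin n) ℤ p.toNat

/-! ### Generating series -/

/-- `hsymm n m` is the coefficient of `t ^ m` in the product of the geometric series
`∑ x_i ^ k t ^ k`. -/
theorem coeff_prod_geom (n m : ℕ) :
    PowerSeries.coeff m (∏ i : Fin n, PowerSeries.mk fun k => (X i : MvPolynomial (Fin n) ℤ) ^ k)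
      = _root_.hsymm n m := by
  rw [PowerSeries.coeff_prod, _root_.hsymm]
  refine Finset.sum_bij' (fun d _ => ⇑d) (fun d _ => Finsupp.equivFunOnFinite.symm d) ?_ ?_ ?_ ?_ ?_
  · intro d hd
    simpa [Finset.Nat.mem_antidiagonalTuple] using hd
  · intro d hd
    simpa [Finset.Nat.mem_antidiagonalTuple] using hd
  · intro d _
    ext; simp
  · intro d _
    ext; simp
  · intro d _
    simp

theorem coeff_prod_one_sub (n m : ℕ) :
    PowerSeries.coeff m
      (∏ i : Fin n, (1 - PowerSeries.C (X i : MvPolynomial (Fin n) ℤ) * PowerSeries.X))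
      = (-1) ^ m * esymm (Fin n) ℤ m := by
  simp_rw [sub_eq_add_neg]
  rw [Finset.prod_one_add, map_sum, esymm, Finset.mul_sum,
    Finset.powersetCard_eq_filter, Finset.sum_filter]
  refine Finset.sum_congr (by simp) fun s _ => ?_
  have : ∏ i ∈ s, -(PowerSeries.C (X i : MvPolynomial (Fin n) ℤ) * PowerSeries.X)
      = PowerSeries.C ((-1) ^ s.card * ∏ i ∈ s, X i) * PowerSeries.X ^ s.card := by
    rw [Finset.prod_neg, Finset.prod_mul_distrib, Finset.prod_const, map_mul, map_prod]
    simp [mul_assoc]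
  rw [this, PowerSeries.coeff_C_mul_X_pow]
  by_cases h : m = s.card
  · simp [h]
  · rw [if_neg h, if_neg (Ne.symm h)]

theorem geom_mul_one_sub {R : Type*} [CommRing R] (x : R) :
    (PowerSeries.mk fun k => x ^ k) * (1 - PowerSeries.C x * PowerSeries.X) = 1 := by
  have h := congrArg (PowerSeries.rescale x) (PowerSeries.mk_one_mul_one_sub_eq_one R)
  simpa [PowerSeries.rescale_mk, PowerSeries.rescale_X] using h

theorem sum_hsymm_mul_esymm (n m : ℕ) :
    ∑ p ∈ Finset.HasAntidiagonal.antidiagonal m, _root_.hsymm n p.1 * ((-1) ^ p.2 * esymm (Fin n) ℤ p.2)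
      = if m = 0 then 1 else 0 := by
  have h : (1 : PowerSeries (MvPolynomial (Fin n) ℤ)) = ∏ i : Fin n,
      ((PowerSeries.mk fun k => (X i : MvPolynomial (Fin n) ℤ) ^ k) *
        (1 - PowerSeries.C (X i) * PowerSeries.X)) :=
    (Finset.prod_eq_one fun i _ => geom_mul_one_sub _).symm
  rw [← PowerSeries.coeff_one, h, Finset.prod_mul_distrib, PowerSeries.coeff_mul]
  simp_rw [coeff_prod_geom, coeff_prod_one_sub]

/-! ### The Toeplitz matrices -/

/-- The upper unitriangular Toeplitz matrix `(h_{b-a})` of size `N`. -/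
noncomputable def hToeplitz (n N : ℕ) : Matrix (Fin N) (Fin N) (MvPolynomial (Fin n) ℤ) :=
  Matrix.of fun a b => hZ n ((b : ℕ) - (a : ℕ) : ℤ)

/-- The signed Toeplitz matrix `((-1)^{a+b} e_{b-a})` of size `N`, with exponent `a + b` in place of
`b - a` so as to stay in `ℕ`. -/
noncomputable def eToeplitz (n N : ℕ) : Matrix (Fin N) (Fin N) (MvPolynomial (Fin n) ℤ) :=
  Matrix.of fun a b => (-1) ^ ((a : ℕ) + b) * eZ n ((b : ℕ) - (a : ℕ) : ℤ)

theorem hZ_of_neg (n : ℕ) {p : ℤ} (h : p < 0) : hZ n p = 0 := if_pos h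

theorem eZ_of_neg (n : ℕ) {p : ℤ} (h : p < 0) : eZ n p = 0 := if_pos h

theorem hZ_natCast (n p : ℕ) : hZ n (p : ℤ) = _root_.hsymm n p := by
  simp [hZ]

theorem eZ_natCast (n p : ℕ) : eZ n (p : ℤ) = esymm (Fin n) ℤ p := by
  simp [eZ]

theorem toeplitz_mul (n N : ℕ) : hToeplitz n N * eToeplitz n N = 1 := by
  ext1 a b
  rw [Matrix.mul_apply]
  simp only [hToeplitz, eToeplitz, Matrix.of_apply]
  rcases lt_or_ge b a with hab | hab
  · rw [Matrix.one_apply_ne hab.ne']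
    refine Finset.sum_eq_zero fun k _ => ?_
    rcases lt_or_ge k a with hk | hk
    · rw [hZ_of_neg n (by have := Fin.lt_def.1 hk; omega), zero_mul]
    · rw [eZ_of_neg n (by have := Fin.lt_def.1 hab; have := Fin.le_def.1 hk; omega), mul_zero,
        mul_zero]
  · have hab' : (a : ℕ) ≤ b := hab
    have hb := b.isLt
    rw [Fin.sum_univ_eq_sum_range (fun k => hZ n ((k : ℕ) - (a : ℕ) : ℤ) *
      ((-1) ^ (k + (b : ℕ)) * eZ n ((b : ℕ) - (k : ℕ) : ℤ))) N]
    trans (if (b : ℕ) - a = 0 then 1 else 0 : MvPolynomial (Fin n) ℤ)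
    · rw [← sum_hsymm_mul_esymm]
      symm
      -- Only the terms `k = a + p.1` with `p.1 + p.2 = b - a` survive.
      refine Finset.sum_of_injOn (fun p => a + p.1) ?_ ?_ ?_ ?_
      · rintro ⟨x, y⟩ hx ⟨z, w⟩ hz h
        simp only [Finset.mem_coe,
          Finset.HasAntidiagonal.mem_antidiagonal, Prod.mk.injEq] at *
        omega
      · rintro ⟨x, y⟩ hx
        simp only [Finset.mem_coe, Finset.HasAntidiagonal.mem_antidiagonal, Finset.mem_range] at *
        omega
      · intro k _ hk
        rcases lt_or_ge k a with h | h
        · rw [hZ_of_neg n (by omega), zero_mul]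
        · rcases lt_or_ge (b : ℕ) k with h' | h'
          · rw [eZ_of_neg n (by omega), mul_zero, mul_zero]
          · refine absurd ⟨(k - a, b - k), ?_, ?_⟩ hk
            · simp only [Finset.mem_coe, Finset.HasAntidiagonal.mem_antidiagonal]; omega
            · simp only; omega
      · rintro ⟨x, y⟩ hx
        simp only [Finset.HasAntidiagonal.mem_antidiagonal] at hx
        have h1 : (((a : ℕ) + x : ℕ) : ℤ) - (a : ℕ) = (x : ℕ) := by push_cast; ring
        have h2 : ((b : ℕ) : ℤ) - ((a : ℕ) + x : ℕ) = (y : ℕ) := by omega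
        have h3 : (a : ℕ) + x + b = y + 2 * (a + x) := by omega
        simp only [h1, h2, h3, hZ_natCast, eZ_natCast, pow_add, pow_mul, neg_one_sq, one_pow,
          mul_one]
    · by_cases h : a = b
      · subst h; simp
      · rw [Matrix.one_apply_ne h, if_neg]
        have : (a : ℕ) ≠ b := fun h' => h (Fin.ext h')
        omega

theorem det_hToeplitz (n N : ℕ) : (hToeplitz n N).det = 1 := by
  rw [Matrix.det_of_isUpperTriangular]
  · refine Finset.prod_eq_one fun i _ => ?_
    have h := sum_hsymm_mul_esymm n 0
    have h2 := hZ_natCast n 0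
    simp only [Finset.Nat.antidiagonal_zero, Finset.sum_singleton, pow_zero, esymm_zero,
      mul_one, if_true] at h
    simpa [hToeplitz] using h2.trans h
  · intro i j hij
    have : (j : ℕ) < i := hij
    exact hZ_of_neg n (by omega)

/-! ### Complementary minors -/

/-- Jacobi's complementary minor theorem for inverse matrices `A`, `B`: the rows `π (M + i)` and the
last `L` columns of `A` against the first `M` rows and the columns `π j` of `B`. -/
theorem det_complementary_minor {R : Type*} [CommRing R] {M L : ℕ}
    (A B : Matrix (Fin (M + L)) (Fin (M + L)) R) (hAB : A * B = 1)
    (π : Equiv.Perm (Fin (M + L))) :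
    (A.submatrix (fun i : Fin L => π (Fin.natAdd M i)) (Fin.natAdd M)).det =
      (Equiv.Perm.sign π : R) * A.det *
        (B.submatrix (Fin.castAdd L) (fun j : Fin M => π (Fin.castAdd L j))).det := by
  set ρ : Fin M ⊕ Fin L ≃ Fin (M + L) := finSumFinEquiv
  set A' := A.submatrix (ρ.trans π) ρ
  set B' := B.submatrix ρ (ρ.trans π)
  have h1 : A' * B' = 1 := by
    rw [Matrix.submatrix_mul_equiv, hAB, Matrix.submatrix_one_equiv]
  have hA : A'.det = (Equiv.Perm.sign π : R) * A.det := by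
    rw [← Matrix.det_permute, ← Matrix.det_submatrix_equiv_self ρ]
    rfl
  rw [← Matrix.fromBlocks_toBlocks A', ← Matrix.fromBlocks_toBlocks B', Matrix.fromBlocks_multiply,
    ← Matrix.fromBlocks_one, Matrix.fromBlocks_inj] at h1
  obtain ⟨h11, -, h21, -⟩ := h1
  -- Keeping only the first block column of `B'` makes the product block triangular.
  have h2 : A' * Matrix.fromBlocks B'.toBlocks₁₁ 0 B'.toBlocks₂₁ 1 =
      Matrix.fromBlocks 1 A'.toBlocks₁₂ 0 A'.toBlocks₂₂ := by
    conv_lhs => rw [← Matrix.fromBlocks_toBlocks A', Matrix.fromBlocks_multiply, h11, h21]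
    simp
  have h3 := congrArg Matrix.det h2
  rw [Matrix.det_mul, Matrix.det_fromBlocks_zero₁₂, Matrix.det_fromBlocks_zero₂₁, Matrix.det_one,
    Matrix.det_one, mul_one, one_mul, hA] at h3
  exact h3.symm

/-! ### The permutation attached to a partition -/

/-- For `lam` in an `L × M` box with conjugate `c`, the numbers `k + c (M - 1 - k)` and
`M + i - lam i` together exhaust `0, …, M + L - 1`; listing them in this order is a permutation whose
inversions are the cells of `lam`, counted by columns in the formula for its sign. -/
theorem exists_complementary_perm {M L : ℕ} (lam c : ℕ → ℕ) (hlam : Antitone lam) (hc : Antitone c)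
    (hM : ∀ i, lam i ≤ M) (hL : ∀ k, c k ≤ L)
    (hconj : ∀ i k, i < L → (i < c k ↔ k < lam i)) :
    ∃ π : Equiv.Perm (Fin (M + L)),
      (∀ k : Fin M, (π (Fin.castAdd L k) : ℕ) = k + c (M - 1 - k)) ∧
      (∀ i : Fin L, (π (Fin.natAdd M i) : ℕ) = M + i - lam i) ∧
      Equiv.Perm.sign π = ∏ k : Fin M, (-1) ^ c (M - 1 - k) := by
  let f : Fin (M + L) → Fin (M + L) := Fin.addCases
    (fun k : Fin M => ⟨k + c (M - 1 - k), by have := hL (M - 1 - k); omega⟩)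
    (fun i : Fin L => ⟨M + i - lam i, by omega⟩)
  have f1 : ∀ k : Fin M, (f (Fin.castAdd L k) : ℕ) = k + c (M - 1 - k) := fun k => by simp [f]
  have f2 : ∀ i : Fin L, (f (Fin.natAdd M i) : ℕ) = M + i - lam i := fun i => by simp [f]
  have m1 : ∀ k k' : Fin M, k < k' → f (Fin.castAdd L k) < f (Fin.castAdd L k') := by
    intro k k' h
    rw [Fin.lt_def] at h
    rw [Fin.lt_def, f1, f1]
    have : c (M - 1 - k) ≤ c (M - 1 - k') := hc (by omega)
    omega
  have m2 : ∀ i i' : Fin L, i < i' → f (Fin.natAdd M i) < f (Fin.natAdd M i') := by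
    intro i i' h
    rw [Fin.lt_def] at h
    rw [Fin.lt_def, f2, f2]
    have : lam i' ≤ lam i := hlam h.le
    have := hM i
    omega
  -- Both alternatives give strict inequalities, so the two families are also disjoint.
  have m3 : ∀ (k : Fin M) (i : Fin L), (i : ℕ) < c (M - 1 - k) →
      f (Fin.natAdd M i) < f (Fin.castAdd L k) := by
    intro k i h
    rw [Fin.lt_def, f1, f2]
    have := (hconj i (M - 1 - k) i.isLt).1 h
    omega
  have m4 : ∀ (k : Fin M) (i : Fin L), ¬ (i : ℕ) < c (M - 1 - k) →
      f (Fin.castAdd L k) < f (Fin.natAdd M i) := by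
    intro k i h
    rw [Fin.lt_def, f1, f2]
    have := mt (hconj i (M - 1 - k) i.isLt).2 h
    omega
  have m5 : ∀ (k : Fin M) (i : Fin L), f (Fin.castAdd L k) ≠ f (Fin.natAdd M i) := fun k i => by
    by_cases h : (i : ℕ) < c (M - 1 - k)
    · exact (m3 k i h).ne'
    · exact (m4 k i h).ne
  have inj : Function.Injective f := by
    intro a b
    induction a using Fin.addCases with
    | left k =>
      induction b using Fin.addCases with
      | left k' =>
        intro h
        rcases lt_trichotomy k k' with h' | h' | h'
        · exact absurd h (m1 _ _ h').ne
        · rw [h']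
        · exact absurd h (m1 _ _ h').ne'
      | right i => exact fun h => absurd h (m5 k i)
    | right i =>
      induction b using Fin.addCases with
      | left k => exact fun h => absurd h.symm (m5 k i)
      | right i' =>
        intro h
        rcases lt_trichotomy i i' with h' | h' | h'
        · exact absurd h (m2 _ _ h').ne
        · rw [h']
        · exact absurd h (m2 _ _ h').ne'
  refine ⟨Equiv.ofBijective f (Finite.injective_iff_bijective.1 inj), f1, f2, ?_⟩
  rw [Equiv.Perm.sign_eq_prod_prod_Iio]
  simp only [Equiv.ofBijective_apply]
  have hIio : ∀ (b : Fin (M + L)) (g : Fin (M + L) → ℤˣ),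
      ∏ a ∈ Finset.Iio b, g a = ∏ a, if a < b then g a else 1 := fun b g => by
    rw [← Finset.prod_filter]
    congr 1
    ext; simp
  simp_rw [hIio]
  rw [Fin.prod_univ_add, Finset.prod_eq_one, one_mul]
  -- Only pairs of a position `k < M` and a position `M + i` contribute.
  · trans ∏ i : Fin L, ∏ k : Fin M, (if (i : ℕ) < c (M - 1 - k) then -1 else 1 : ℤˣ)
    · refine Finset.prod_congr rfl fun i _ => ?_
      rw [Fin.prod_univ_add]
      conv_rhs => rw [← mul_one (∏ k : Fin M, _)]
      congr 1
      · refine Finset.prod_congr rfl fun k _ => ?_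
        rw [if_pos (Fin.lt_def.2 (by simp; omega))]
        by_cases h : (i : ℕ) < c (M - 1 - k)
        · rw [if_pos h, if_neg (m3 k i h).not_gt]
        · rw [if_neg h, if_pos (m4 k i h)]
      · refine Finset.prod_eq_one fun i' _ => ?_
        split_ifs with h h'
        · rfl
        · exact absurd (m2 i' i (by rw [Fin.lt_def] at h ⊢; simpa using h)) h'
        · rfl
    · rw [Finset.prod_comm]
      refine Finset.prod_congr rfl fun k _ => ?_
      rw [Fin.prod_univ_eq_prod_range (fun i => if i < c (M - 1 - k) then (-1 : ℤˣ) else 1) L,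
        ← Finset.prod_filter, Finset.prod_const]
      congr 1
      have : (Finset.range L).filter (fun i => i < c (M - 1 - k)) =
          Finset.range (c (M - 1 - k)) := by
        ext i
        have := hL (M - 1 - k)
        simp only [Finset.mem_filter, Finset.mem_range]
        omega
      rw [this, Finset.card_range]
  · intro k _
    refine Finset.prod_eq_one fun a _ => ?_
    induction a using Fin.addCases with
    | left k' =>
      split_ifs with h h'
      · rfl
      · exact absurd (m1 k' k (by rw [Fin.lt_def] at h ⊢; simpa using h)) h'
      · rfl
    | right i =>
      rw [if_neg]
      rw [Fin.lt_def]
      simp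
      omega

/-! ### The dual Jacobi–Trudi identity -/

/-- dual Jacobi–Trudi identity.  Here `λ : ℕ → ℕ` (0-indexed) is a
partition of length exactly `L`, its conjugate is `conj j = #{i : λ_i ≥ j + 1}` (0-indexed),
which is a partition of length `λ 0 = ℓ(λ̃)`, and `n ≥ λ 0` is arbitrary. -/
theorem dual_jacobiTrudi
    (lam : ℕ → ℕ) (hlam : Antitone lam) (L : ℕ)
    (hpos : ∀ i, i < L → lam i ≠ 0) (hL : ∀ i, L ≤ i → lam i = 0)
    (n : ℕ) (hn : lam 0 ≤ n) :
    Matrix.det (Matrix.of fun i j : Fin L => hZ n ((lam i : ℤ) + (j : ℕ) - (i : ℕ))) =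
    Matrix.det (Matrix.of fun i j : Fin (lam 0) =>
      eZ n ((((Finset.range L).filter fun r => (i : ℕ) + 1 ≤ lam r).card
        : ℤ) + (j : ℕ) - (i : ℕ))) := by
  set c : ℕ → ℕ := fun k => ((Finset.range L).filter fun r => k + 1 ≤ lam r).card with hcdef
  have hc : Antitone c := fun k k' h =>
    Finset.card_le_card (Finset.monotone_filter_right _ fun r _ hr => by omega)
  have hcL : ∀ k, c k ≤ L := fun k => (Finset.card_filter_le _ _).trans (Finset.card_range L).le
  have hM : ∀ i, lam i ≤ lam 0 := fun i => hlam (Nat.zero_le i)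
  have hconj : ∀ i k, i < L → (i < c k ↔ k < lam i) := by
    intro i k hi
    constructor
    · intro h
      by_contra hle
      -- If `lam i ≤ k`, the rows counted by `c k` all lie strictly above row `i`.
      have : c k ≤ (Finset.range i).card := Finset.card_le_card fun r hr => by
        simp only [Finset.mem_filter, Finset.mem_range] at hr ⊢
        by_contra hir
        have : lam r ≤ lam i := hlam (by omega)
        omega
      rw [Finset.card_range] at this
      omega
    · intro h
      have : (Finset.range (i + 1)).card ≤ c k := Finset.card_le_card fun r hr => by
        simp only [Finset.mem_filter, Finset.mem_range] at hr ⊢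
        have : lam i ≤ lam r := hlam (by omega)
        omega
      rw [Finset.card_range] at this
      omega
  obtain ⟨π, hπ1, hπ2, hsign⟩ := exists_complementary_perm lam c hlam hc hM hcL hconj
  have key := det_complementary_minor _ _ (toeplitz_mul n (lam 0 + L)) π
  rw [det_hToeplitz, mul_one] at key
  have hh : (Matrix.of fun i j : Fin L => hZ n ((lam i : ℤ) + (j : ℕ) - (i : ℕ))) =
      (hToeplitz n (lam 0 + L)).submatrix (fun i : Fin L => π (Fin.natAdd _ i))
        (Fin.natAdd _) := by
    ext1 i j
    simp only [Matrix.submatrix_apply, hToeplitz, Matrix.of_apply, hπ2, Fin.val_natAdd]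
    congr 1
    have := hM i
    omega
  set G : Matrix (Fin (lam 0)) (Fin (lam 0)) (MvPolynomial (Fin n) ℤ) :=
    Matrix.of fun i j => eZ n ((c i : ℤ) + (j : ℕ) - (i : ℕ)) with hG
  have he : (eToeplitz n (lam 0 + L)).submatrix (Fin.castAdd L)
        (fun j : Fin (lam 0) => π (Fin.castAdd L j)) =
      Matrix.of fun i j : Fin (lam 0) => (-1) ^ (i : ℕ) *
        (Matrix.of fun i j : Fin (lam 0) => (-1) ^ ((j : ℕ) + c (lam 0 - 1 - j)) *
          (G.submatrix Fin.revPerm Fin.revPerm).transpose i j) i j := by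
    ext1 i j
    simp only [Matrix.submatrix_apply, eToeplitz, hG, Matrix.of_apply, hπ1, Fin.val_castAdd,
      Matrix.transpose_apply, Fin.revPerm_apply, Fin.val_rev]
    have h1 : lam 0 - ((j : ℕ) + 1) = lam 0 - 1 - j := by omega
    rw [pow_add, mul_assoc, h1]
    congr 3
    omega
  rw [hh, key, he, Matrix.det_mul_column, Matrix.det_mul_row, Matrix.det_transpose,
    Matrix.det_submatrix_equiv_self, hsign]
  simp only [Units.coe_prod, Units.val_pow_eq_pow_val, Units.val_neg, Units.val_one,
    Int.cast_prod, Int.cast_pow, Int.cast_neg, Int.cast_one]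
  rw [← mul_assoc, ← mul_assoc, ← Finset.prod_mul_distrib, ← Finset.prod_mul_distrib,
    Finset.prod_eq_one, one_mul]
  intro k _
  rw [← pow_add, ← pow_add]
  exact Even.neg_one_pow ⟨k + c (lam 0 - 1 - k), by omega⟩
end

section
/- For every partition λ of length at most n, the Schur polynomial s_λ(X_n) = det(h_{λ_i+j−i}(X_n))_{1≤i,j≤n} equals the tableau sum Σ_T x^{c(T)}, where T ranges over all semistandard Young tableaux of shape λ with entries in {1,…,n}, c(T) = (n_1,…,n_n) records the number n_j of entries equal to j, and x^{c(T)} = x_1^{n_1}⋯x_n^{n_n}. -/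
/-!
Both sides satisfy the same branching rule in the number `m` of variables, for a fixed number `N`
of rows, and they agree for `m = 0`.

*Determinants.* Let `A_l` be the row `(h_{l+j}(x_0, …, x_m))_j`, so that row `i` of the Jacobi-Trudi
matrix is `A_{l_i}` with `l_i = λ_i - i`. The recursion `h_p(x_0, …, x_m) = x_m h_{p-1}(x_0, …, x_m)
+ h_p(x_0, …, x_{m-1})` gives
`A_{l_i} - x_m^{l_i - l_{i+1}} A_{l_{i+1}} = ∑_{λ_{i+1} ≤ v ≤ λ_i} x_m^{λ_i - v} B_{v-i}`,
where `B` is the same row in the variables `x_0, …, x_{m-1}`. The left side is a unitriangular row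
operation (`JT.D_eq_det_rows`), and multilinearity in the rows yields (`JT.D_succ`)
`D_{m+1}(λ) = ∑_ν x_m^{|λ| - |ν|} D_m(ν)`, summed over the `ν` interlacing `λ`, that is
`λ_{i+1} ≤ ν_i ≤ λ_i`.

*Tableaux.* Removing the cells with entry `m` from a tableau of shape `λ` with entries `≤ m` leaves
a tableau of shape `ν` with entries `< m`, where `λ / ν` is a horizontal strip, i.e. `ν` interlaces
`λ`. This is a bijection (`JT.isTab_grow`, `JT.exists_grow`, `JT.grow_injective`) and removes a
factor `x_m^{|λ| - |ν|}` from the weight (`JT.wt_grow`).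
-/

/-!
STATEMENT 5: For every partition `λ` of length at most `n`, the Schur polynomial
`s_λ(X_n) = det(h_{λ_i+j−i}(X_n))_{1≤i,j≤n}` equals the tableau sum `Σ_T x^{c(T)}`, summed
over all semistandard Young tableaux `T` of shape `λ` with entries in `{1, …, n}`.
(Mathlib's `SemistandardYoungTableau` has entries in `ℕ`; entries in `{1, …, n}` correspond
to entries `< n` under the shift by one.)
-/

open MvPolynomial

namespace JT

/-! ### Complete homogeneous polynomials -/

open Finset

variable {R : Type*} [CommRing R]

/-- The complete homogeneous polynomial of degree `p` evaluated at `x 0, …, x (m - 1)`. -/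
def hN (x : ℕ → R) (m p : ℕ) : R :=
  ∑ d ∈ Finset.Nat.antidiagonalTuple m p, ∏ i : Fin m, x i ^ d i

/-- `hN` for an integer degree, zero in negative degrees. -/
def h (x : ℕ → R) (m : ℕ) (p : ℤ) : R := if p < 0 then 0 else hN x m p.toNat

/-- Sorting the monomials by the exponent of the last variable `x m`. -/
theorem hN_last (x : ℕ → R) (m p : ℕ) :
    hN x (m + 1) p = ∑ a ∈ antidiagonal p, x m ^ a.1 * hN x m a.2 := by
  simp only [hN, mul_sum]
  rw [Finset.sum_sigma']
  refine Finset.sum_bij' (fun d _ => ⟨(d (Fin.last m), ∑ i : Fin m, d i.castSucc), Fin.init d⟩)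
    (fun a _ => Fin.snoc a.2 a.1.1) ?_ ?_ ?_ ?_ ?_
  · intro d hd
    simp only [Finset.Nat.mem_antidiagonalTuple, Fin.sum_univ_castSucc] at hd
    simp only [mem_sigma, HasAntidiagonal.mem_antidiagonal, Finset.Nat.mem_antidiagonalTuple]
    exact ⟨by omega, rfl⟩
  · rintro ⟨⟨a, b⟩, d⟩ hd
    simp only [mem_sigma, HasAntidiagonal.mem_antidiagonal,
      Finset.Nat.mem_antidiagonalTuple] at hd ⊢
    simp only [Fin.sum_univ_castSucc, Fin.snoc_castSucc, Fin.snoc_last]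
    omega
  · intro d hd
    exact Fin.snoc_init_self d
  · rintro ⟨⟨a, b⟩, d⟩ hd
    simp only [mem_sigma, HasAntidiagonal.mem_antidiagonal, Finset.Nat.mem_antidiagonalTuple] at hd
    obtain ⟨h1, rfl⟩ := hd
    simp
  · intro d hd
    simp [Fin.prod_univ_castSucc, Fin.init, mul_comm]

theorem h_neg (x : ℕ → R) (m : ℕ) {p : ℤ} (hp : p < 0) : h x m p = 0 := if_pos hp

theorem h_zero (x : ℕ → R) (p : ℤ) : h x 0 p = if p = 0 then 1 else 0 := by
  unfold h hN
  split_ifs with h1 h2 h2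
  · omega
  · rfl
  · subst h2; simp
  · obtain ⟨k, rfl⟩ : ∃ k : ℕ, p = (k + 1 : ℕ) := ⟨p.toNat - 1, by omega⟩
    simp

theorem h_succ (x : ℕ → R) (m : ℕ) (p : ℤ) :
    h x (m + 1) p = x m * h x (m + 1) (p - 1) + h x m p := by
  rcases lt_or_ge p 0 with hp | hp
  · rw [h_neg _ _ hp, h_neg _ _ hp, h_neg _ _ (by omega)]; simp
  lift p to ℕ using hp
  cases p with
  | zero => simp [h, hN_last]
  | succ k =>
    have e : ((k + 1 : ℕ) : ℤ) - 1 = k := by push_cast; ring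
    have e1 : ¬ ((k + 1 : ℕ) : ℤ) < 0 := by omega
    have e2 : ¬ (k : ℤ) < 0 := by omega
    rw [e, h, h, h, if_neg e1, if_neg e2, if_neg e1, Int.toNat_natCast, Int.toNat_natCast,
      hN_last, hN_last, Finset.Nat.sum_antidiagonal_succ, mul_sum]
    simp only [pow_zero, one_mul, pow_succ']
    rw [add_comm]
    simp only [mul_assoc]

/-- The recursion `h_succ` iterated `d` times; `b` may be negative. -/
theorem h_telescope (x : ℕ → R) (m : ℕ) (b : ℤ) (d : ℕ) :
    h x (m + 1) b = x m ^ d * h x (m + 1) (b - d) + ∑ k ∈ range d, x m ^ k * h x m (b - k) := by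
  induction d with
  | zero => simp
  | succ d ih =>
    rw [ih, sum_range_succ, h_succ x m (b - d)]
    push_cast
    rw [show b - (d + 1 : ℤ) = b - d - 1 by ring]
    ring

/-! ### The branching rule for determinants -/

/-- A shape with `N` rows, extended by zero rows to all of `ℕ`. -/
def ext0 {N : ℕ} (L : Fin N → ℕ) (i : ℕ) : ℕ := if hi : i < N then L ⟨i, hi⟩ else 0

theorem ext0_val {N : ℕ} (L : Fin N → ℕ) (i : Fin N) : ext0 L i = L i := by
  simp [ext0]

theorem ext0_of_le {N : ℕ} (L : Fin N → ℕ) {i : ℕ} (hi : N ≤ i) : ext0 L i = 0 := by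
  simp [ext0, hi]

theorem ext0_antitone {N : ℕ} {L : Fin N → ℕ} (hL : Antitone L) : Antitone (ext0 L) := by
  intro i j hij
  unfold ext0
  split_ifs with h1 h2
  · exact hL hij
  · omega
  · omega
  · rfl

/-- The Jacobi-Trudi determinant of the shape `L` in the variables `x 0, …, x (m - 1)`. The number
of rows `N` is independent of `m`. -/
def D {N : ℕ} (x : ℕ → R) (m : ℕ) (L : Fin N → ℕ) : R :=
  Matrix.det (Matrix.of fun i j : Fin N => h x m ((L i : ℤ) + (j : ℕ) - (i : ℕ)))

/-- The shapes `V` interlacing `L`: `L (i + 1) ≤ V i ≤ L i`, with `L N = 0`. Equivalently, `L / V`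
is a horizontal strip. -/
def inter {N : ℕ} (L : Fin N → ℕ) : Finset (Fin N → ℕ) :=
  Fintype.piFinset fun i : Fin N => Finset.Icc (ext0 L (i + 1)) (L i)

theorem mem_inter {N : ℕ} {L V : Fin N → ℕ} :
    V ∈ inter L ↔ ∀ i : ℕ, ext0 L (i + 1) ≤ ext0 V i ∧ ext0 V i ≤ ext0 L i := by
  simp only [inter, Fintype.mem_piFinset, Finset.mem_Icc]
  constructor
  · intro H i
    by_cases hi : i < N
    · have := H ⟨i, hi⟩
      simpa [ext0, hi] using this
    · simp [ext0_of_le _ (not_lt.mp hi), ext0_of_le L (show N ≤ i + 1 by omega)]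
  · intro H i
    have := H i
    rwa [ext0_val, ext0_val] at this

theorem inter_antitone {N : ℕ} {L V : Fin N → ℕ} (hV : V ∈ inter L) : Antitone V := by
  have H : Antitone (ext0 V) :=
    antitone_nat_of_succ_le fun i => ((mem_inter.1 hV (i + 1)).2).trans (mem_inter.1 hV i).1
  intro i j hij
  have := H (show (i : ℕ) ≤ j from hij)
  rwa [ext0_val, ext0_val] at this

/-- Subtracting from each row the right multiple of the next one rewrites the determinant in
`m + 1` variables through `h` in `m` variables. -/
theorem D_eq_det_rows {N : ℕ} (x : ℕ → R) (m : ℕ) {L : Fin N → ℕ} (hL : Antitone L) :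
    D x (m + 1) L = Matrix.det (Matrix.of fun i j : Fin N =>
      ∑ v ∈ Finset.Icc (ext0 L (i + 1)) (L i),
        x m ^ (L i - v) * h x m ((v : ℤ) + (j : ℕ) - (i : ℕ))) := by
  -- Left multiplication by `C` subtracts `x m ^ (l_i - l_{i+1})` times row `i + 1` from row `i`,
  -- where `l_i = L i - i`.
  let C : Matrix (Fin N) (Fin N) R := Matrix.of fun i k =>
    (if k = i then 1 else 0) -
      if (k : ℕ) = i + 1 then x m ^ (L i + 1 - ext0 L (i + 1)) else 0
  have hC : C.det = 1 := by
    rw [Matrix.det_of_isUpperTriangular]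
    · simp [C]
    · intro i k hik
      have h1 : k < i := hik
      have h2 : k ≠ i := h1.ne
      have h3 : ¬ (k : ℕ) = i + 1 := by have : (k : ℕ) < i := h1; omega
      simp [C, h2, h3]
  rw [D, ← one_mul (Matrix.det _), ← hC, ← Matrix.det_mul]
  congr 1
  ext i j
  have hle : ext0 L (i + 1) ≤ L i := by
    rw [← ext0_val L i]; exact ext0_antitone hL (Nat.le_succ _)
  have tel := h_telescope x m ((L i : ℤ) + (j : ℕ) - (i : ℕ)) (L i + 1 - ext0 L (i + 1))
  have hs : ∑ k ∈ range (L i + 1 - ext0 L (i + 1)),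
      x m ^ k * h x m ((L i : ℤ) + (j : ℕ) - (i : ℕ) - k) =
      ∑ v ∈ Finset.Icc (ext0 L (i + 1)) (L i),
        x m ^ (L i - v) * h x m ((v : ℤ) + (j : ℕ) - (i : ℕ)) := by
    refine Finset.sum_bij' (fun k _ => L i - k) (fun v _ => L i - v) ?_ ?_ ?_ ?_ ?_
    · intro k hk; rw [mem_range] at hk; rw [Finset.mem_Icc]; omega
    · intro k hk; rw [Finset.mem_Icc] at hk; rw [mem_range]; omega
    · intro k hk; rw [mem_range] at hk; omega
    · intro k hk; rw [Finset.mem_Icc] at hk; omega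
    · intro k hk
      rw [mem_range] at hk
      have e1 : L i - (L i - k) = k := by omega
      have e2 : ((L i - k : ℕ) : ℤ) = L i - k := by omega
      rw [e1, e2]
      congr 2; ring
  rw [hs] at tel
  simp only [Matrix.mul_apply, Matrix.of_apply, C, sub_mul, ite_mul, one_mul, zero_mul,
    Finset.sum_sub_distrib, Finset.sum_ite_eq', Finset.mem_univ, if_true]
  rw [tel, sub_eq_iff_eq_add, add_comm]
  congr 1
  by_cases hi : (i : ℕ) + 1 < N
  · rw [Finset.sum_eq_single (⟨i + 1, hi⟩ : Fin N)]
    · have e : ext0 L (i + 1) = L ⟨i + 1, hi⟩ := ext0_val L ⟨i + 1, hi⟩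
      simp only [if_true]
      congr 2
      rw [← e]
      push_cast [show ext0 L (i + 1) ≤ L i + 1 by omega]
      ring
    · intro k _ hk
      rw [if_neg]
      intro h'; exact hk (Fin.ext h')
    · exact fun hne => absurd (Finset.mem_univ _) hne
  · rw [Finset.sum_eq_zero]
    -- The last row is unchanged by `C`: the telescoping remainder has negative degree `j - N`.
    · rw [ext0_of_le L (not_lt.mp hi), h_neg, mul_zero]
      have := j.isLt
      push_cast
      omega
    · intro k _
      rw [if_neg]
      have := k.isLt
      omega

theorem D_succ {N : ℕ} (x : ℕ → R) (m : ℕ) {L : Fin N → ℕ} (hL : Antitone L) :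
    D x (m + 1) L = ∑ V ∈ inter L, (∏ i, x m ^ (L i - V i)) * D x m V := by
  rw [D_eq_det_rows x m hL]
  have key := (Matrix.detRowAlternating (n := Fin N) (R := R)).toMultilinearMap.map_sum_finset
    (fun (i : Fin N) (v : ℕ) => fun j : Fin N =>
      x m ^ (L i - v) * h x m ((v : ℤ) + (j : ℕ) - (i : ℕ)))
    (fun i : Fin N => Finset.Icc (ext0 L (i + 1)) (L i))
  have e : (Matrix.of fun i j : Fin N =>
      ∑ v ∈ Finset.Icc (ext0 L (i + 1)) (L i),
        x m ^ (L i - v) * h x m ((v : ℤ) + (j : ℕ) - (i : ℕ))) =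
      fun i : Fin N => ∑ v ∈ Finset.Icc (ext0 L (i + 1)) (L i),
        fun j : Fin N => x m ^ (L i - v) * h x m ((v : ℤ) + (j : ℕ) - (i : ℕ)) := by
    ext i j
    simp [Finset.sum_apply]
  rw [e]
  refine key.trans (Finset.sum_congr rfl fun V _ => ?_)
  exact Matrix.det_mul_column (fun i => x m ^ (L i - V i))
    (Matrix.of fun i j : Fin N => h x m ((V i : ℤ) + (j : ℕ) - (i : ℕ)))

/-! ### The branching rule for tableaux -/

/-- `T` is a semistandard tableau of shape `l` with entries `< m`, and zero off the shape. -/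
structure IsTab (l : ℕ → ℕ) (m : ℕ) (T : ℕ → ℕ → ℕ) : Prop where
  row : ∀ {i j1 j2 : ℕ}, j1 < j2 → j2 < l i → T i j1 ≤ T i j2
  col : ∀ {i1 i2 j : ℕ}, i1 < i2 → j < l i2 → T i1 j < T i2 j
  zeros : ∀ {i j : ℕ}, l i ≤ j → T i j = 0
  lt : ∀ {i j : ℕ}, j < l i → T i j < m

/-- Extend a filling `T` of `v` to the larger shape `l` by entries `m`. -/
def grow (m : ℕ) (l v : ℕ → ℕ) (T : ℕ → ℕ → ℕ) (i j : ℕ) : ℕ :=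
  if j < v i then T i j else if j < l i then m else 0

theorem isTab_grow {N m : ℕ} {L V : Fin N → ℕ} (hL : Antitone L) (hV : V ∈ inter L)
    {T : ℕ → ℕ → ℕ} (hT : IsTab (ext0 V) m T) :
    IsTab (ext0 L) (m + 1) (grow m (ext0 L) (ext0 V) T) := by
  have H := mem_inter.1 hV
  have hVa := ext0_antitone (inter_antitone hV)
  have hLa := ext0_antitone hL
  constructor
  · intro i j1 j2 hj hl
    unfold grow
    by_cases h2 : j2 < ext0 V i
    · rw [if_pos (hj.trans h2), if_pos h2]; exact hT.row hj h2
    · rw [if_neg h2, if_pos hl]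
      split_ifs with h1 h3
      · exact (hT.lt h1).le
      · rfl
      · omega
  · intro i1 i2 j hi hl
    unfold grow
    have h1 : j < ext0 V i1 := hl.trans_le ((hLa (show i1 + 1 ≤ i2 from hi)).trans (H i1).1)
    rw [if_pos h1]
    split_ifs with h2
    · exact hT.col hi h2
    · exact hT.lt h1
  · intro i j hl
    unfold grow
    rw [if_neg (not_lt.2 ((H i).2.trans hl)), if_neg (not_lt.2 hl)]
  · intro i j hl
    unfold grow
    split_ifs with h1
    · exact (hT.lt h1).trans (Nat.lt_succ_self m)
    · omega

/-- Every tableau of shape `L` with entries `≤ m` arises by adding a horizontal strip of entries `m`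
to the subtableau of its entries `< m`. -/
theorem exists_grow {N m : ℕ} {L : Fin N → ℕ} (hL : Antitone L)
    {T : ℕ → ℕ → ℕ} (hT : IsTab (ext0 L) (m + 1) T) :
    ∃ V ∈ inter L, ∃ T', IsTab (ext0 V) m T' ∧ grow m (ext0 L) (ext0 V) T' = T := by
  classical
  have hLa := ext0_antitone hL
  have hex : ∀ i, ∃ k, ext0 L i ≤ k ∨ m ≤ T i k := fun i => ⟨_, Or.inl le_rfl⟩
  -- Rows are weakly increasing, so the entries `< m` form an initial segment of each row.
  have hv : ∀ i, ∃ k ≤ ext0 L i, ∀ j < ext0 L i, (T i j < m ↔ j < k) := by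
    intro i
    refine ⟨Nat.find (hex i), Nat.find_min' _ (Or.inl le_rfl),
      fun j hj => ⟨fun h1 => ?_, fun h1 => ?_⟩⟩
    · by_contra h2
      rw [not_lt] at h2
      rcases Nat.find_spec (hex i) with h3 | h3
      · omega
      · rcases h2.eq_or_lt with h4 | h4
        · rw [h4] at h3; omega
        · have := hT.row h4 hj; omega
    · have := Nat.find_min (hex i) h1
      omega
  choose v hv1 hv2 using hv
  have hext : ext0 (fun i : Fin N => v i) = v := by
    funext i
    by_cases hi : i < N
    · simp [ext0, hi]
    · have := hv1 i
      rw [ext0_of_le L (not_lt.1 hi)] at this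
      rw [ext0_of_le _ (not_lt.1 hi)]; omega
  refine ⟨fun i => v i, ?_, fun i j => if j < v i then T i j else 0, ?_, ?_⟩
  · rw [mem_inter, hext]
    refine fun i => ⟨?_, hv1 i⟩
    by_contra hlt
    rw [not_le] at hlt
    have h1 : v i < ext0 L i := hlt.trans_le (hLa (Nat.le_succ i))
    have h2 := (hv2 i _ h1)
    have h3 : T i (v i) < T (i + 1) (v i) := hT.col (Nat.lt_succ_self i) hlt
    have h4 := hT.lt hlt
    omega
  · rw [hext]
    constructor
    · intro i j1 j2 hj h2
      rw [if_pos (hj.trans h2), if_pos h2]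
      exact hT.row hj (h2.trans_le (hv1 i))
    · intro i1 i2 j hi h2
      have h3 : j < ext0 L i2 := h2.trans_le (hv1 i2)
      have h4 : T i1 j < T i2 j := hT.col hi h3
      have h5 := (hv2 i2 j h3).2 h2
      rw [if_pos h2, if_pos ((hv2 i1 j (h3.trans_le (hLa hi.le))).1 (by omega))]
      exact h4
    · intro i j h1
      rw [if_neg (not_lt.2 h1)]
    · intro i j h1
      rw [if_pos h1]
      exact (hv2 i j (h1.trans_le (hv1 i))).2 h1
  · rw [hext]
    funext i j
    unfold grow
    split_ifs with h1 h2
    · exact if_pos h1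
    · have := hT.lt h2
      have := hv2 i j h2
      omega
    · exact (hT.zeros (not_lt.1 h2)).symm

/-- The inner shape can be read off as the cells with entry `< m`. -/
theorem grow_injective {N m : ℕ} {L V W : Fin N → ℕ} (hV : V ∈ inter L) (hW : W ∈ inter L)
    {T U : ℕ → ℕ → ℕ} (hT : IsTab (ext0 V) m T) (hU : IsTab (ext0 W) m U)
    (hg : grow m (ext0 L) (ext0 V) T = grow m (ext0 L) (ext0 W) U) : V = W ∧ T = U := by
  have H1 := mem_inter.1 hV
  have H2 := mem_inter.1 hW
  have hg' := fun i j => congrFun (congrFun hg i) j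
  unfold grow at hg'
  have hVW : ∀ i, ext0 V i = ext0 W i := by
    intro i
    rcases lt_trichotomy (ext0 V i) (ext0 W i) with h1 | h1 | h1
    · have := hg' i (ext0 V i)
      rw [if_neg (lt_irrefl _), if_pos h1, if_pos (h1.trans_le (H2 i).2)] at this
      have := hU.lt h1
      omega
    · exact h1
    · have := hg' i (ext0 W i)
      rw [if_neg (lt_irrefl _), if_pos h1, if_pos (h1.trans_le (H1 i).2)] at this
      have := hT.lt h1
      omega
  refine ⟨funext fun i => by have := hVW i; rwa [ext0_val, ext0_val] at this, ?_⟩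
  funext i j
  by_cases hj : j < ext0 V i
  · have := hg' i j
    rwa [if_pos hj, if_pos (hVW i ▸ hj)] at this
  · rw [hT.zeros (not_lt.1 hj), hU.zeros (hVW i ▸ not_lt.1 hj)]

/-- The weight `∏ x_{T(c)}` of a filling, over the cells `c` of the shape `L`. -/
def wt {N : ℕ} (x : ℕ → R) (L : Fin N → ℕ) (T : ℕ → ℕ → ℕ) : R :=
  ∏ i : Fin N, ∏ j ∈ range (L i), x (T i j)

theorem wt_grow {N m : ℕ} (x : ℕ → R) {L V : Fin N → ℕ} (hV : V ∈ inter L) (T : ℕ → ℕ → ℕ) :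
    wt x L (grow m (ext0 L) (ext0 V) T) = (∏ i, x m ^ (L i - V i)) * wt x V T := by
  have H := mem_inter.1 hV
  unfold wt
  rw [← Finset.prod_mul_distrib]
  refine Finset.prod_congr rfl fun i _ => ?_
  have hi := (H i).2
  rw [ext0_val, ext0_val] at hi
  rw [← Finset.prod_range_mul_prod_Ico _ hi, mul_comm]
  congr 1
  · rw [← Nat.card_Ico, ← Finset.prod_const]
    refine Finset.prod_congr rfl fun j hj => ?_
    rw [Finset.mem_Ico] at hj
    rw [grow, ext0_val, ext0_val, if_neg (not_lt.2 hj.1), if_pos hj.2]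
  · refine Finset.prod_congr rfl fun j hj => ?_
    rw [Finset.mem_range] at hj
    rw [grow, ext0_val, if_pos hj]

/-- The tableau formula for `N` rows and `m` variables. The finite set `F` of tableaux is built
along the induction, so finiteness comes with it. -/
theorem main {N : ℕ} (x : ℕ → R) (m : ℕ) : ∀ L : Fin N → ℕ, Antitone L →
    ∃ F : Finset (ℕ → ℕ → ℕ), (∀ T, T ∈ F ↔ IsTab (ext0 L) m T) ∧ D x m L = ∑ T ∈ F, wt x L T := by
  classical
  induction m with
  | zero =>
    intro L hL
    by_cases h0 : L = 0
    · subst h0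
      have e0 : ∀ i, ext0 (0 : Fin N → ℕ) i = 0 := fun i => by simp [ext0]
      refine ⟨{0}, fun T => ?_, ?_⟩
      · rw [Finset.mem_singleton]
        constructor
        · rintro rfl
          constructor <;> simp [e0]
        · intro hT
          funext i j
          exact hT.zeros (by simp [e0])
      · have : (Matrix.of fun i j : Fin N =>
            h x 0 (((0 : Fin N → ℕ) i : ℤ) + (j : ℕ) - (i : ℕ))) = 1 := by
          ext i j
          rw [Matrix.of_apply, h_zero, Matrix.one_apply]
          congr 1
          simp only [Pi.zero_apply, Fin.ext_iff, eq_iff_iff]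
          push_cast
          omega
        rw [D, this]
        simp [wt]
    · obtain ⟨k, hk⟩ : ∃ k, L k ≠ 0 := by
        by_contra! hc
        exact h0 (funext hc)
      refine ⟨∅, fun T => ?_, ?_⟩
      · simp only [Finset.notMem_empty, false_iff]
        intro hT
        have := hT.lt (i := k) (j := 0) (by rw [ext0_val]; omega)
        omega
      · rw [Finset.sum_empty, D]
        have hN : 0 < N := k.pos
        refine Matrix.det_eq_zero_of_row_eq_zero ⟨0, hN⟩ fun j => ?_
        have := hL (show (⟨0, hN⟩ : Fin N) ≤ k from Nat.zero_le _)
        rw [Matrix.of_apply, h_zero, if_neg]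
        push_cast
        omega
  | succ m ih =>
    intro L hL
    have ih' : ∀ V : Fin N → ℕ, ∃ F : Finset (ℕ → ℕ → ℕ), V ∈ inter L →
        (∀ T, T ∈ F ↔ IsTab (ext0 V) m T) ∧ D x m V = ∑ T ∈ F, wt x V T := by
      intro V
      by_cases hV : V ∈ inter L
      · obtain ⟨F, hF⟩ := ih V (inter_antitone hV)
        exact ⟨F, fun _ => hF⟩
      · exact ⟨∅, fun h' => absurd h' hV⟩
    choose F hF using ih'
    refine ⟨((inter L).sigma F).image fun a => grow m (ext0 L) (ext0 a.1) a.2, fun T => ?_, ?_⟩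
    · simp only [Finset.mem_image, Finset.mem_sigma]
      constructor
      · rintro ⟨⟨V, T'⟩, ⟨hV, hT'⟩, rfl⟩
        exact isTab_grow hL hV (((hF V hV).1 T').1 hT')
      · intro hT
        obtain ⟨V, hV, T', hT', e⟩ := exists_grow hL hT
        exact ⟨⟨V, T'⟩, ⟨hV, ((hF V hV).1 T').2 hT'⟩, e⟩
    · rw [Finset.sum_image, Finset.sum_sigma, D_succ x m hL]
      · refine Finset.sum_congr rfl fun V hV => ?_
        rw [(hF V hV).2, Finset.mul_sum]
        exact Finset.sum_congr rfl fun T _ => (wt_grow x hV T).symm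
      · rintro ⟨V, T⟩ hV ⟨W, U⟩ hW hg
        rw [Finset.mem_coe, Finset.mem_sigma] at hV hW
        obtain ⟨rfl, rfl⟩ := grow_injective hV.1 hW.1 (((hF V hV.1).1 T).1 hV.2)
          (((hF W hW.1).1 U).1 hW.2) hg
        rfl

end JT

/-- tableau formula for Schur polynomials.  Here `λ` is a partition of
length at most `n` (an antitone `Fin n → ℕ`), and `μ` is the Young diagram with rows
`λ_0 ≥ λ_1 ≥ ⋯`.  The sum runs over all semistandard Young tableaux of shape `μ` all of
whose entries are `< n`, and the monomial of `T` is `∏_j x_j^{(number of entries equal to j)}`. -/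
theorem schur_eq_tableau_sum (n : ℕ) (lam : Fin n → ℕ) (hlam : Antitone lam)
    (μ : YoungDiagram)
    (hμ : ∀ i : ℕ, μ.rowLen i = if h : i < n then lam ⟨i, h⟩ else 0) :
    Matrix.det (Matrix.of fun i j : Fin n => hZ n ((lam i : ℤ) + (j : ℕ) - (i : ℕ))) =
      ∑ᶠ T ∈ {T : SemistandardYoungTableau μ | ∀ i j : ℕ, (i, j) ∈ μ → T i j < n},
        ∏ j : Fin n, (X j : MvPolynomial (Fin n) ℤ) ^
          (μ.cells.filter fun c => T c.1 c.2 = (j : ℕ)).card := by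
  have hμ' : ∀ i, μ.rowLen i = JT.ext0 lam i := hμ
  have hmem : ∀ i j : ℕ, (i, j) ∈ μ ↔ j < JT.ext0 lam i := fun i j => by
    rw [YoungDiagram.mem_iff_lt_rowLen, hμ']
  let x : ℕ → MvPolynomial (Fin n) ℤ := fun k => if hk : k < n then X ⟨k, hk⟩ else 0
  have hx : ∀ j : Fin n, x j = X j := fun j => by simp [x]
  obtain ⟨F, hF, hsum⟩ := JT.main x n lam hlam
  have hZh : ∀ p, hZ n p = JT.h x n p := fun p => by
    simp [hZ, JT.h, _root_.hsymm, JT.hN, hx]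
  have hD : Matrix.det (Matrix.of fun i j : Fin n => hZ n ((lam i : ℤ) + (j : ℕ) - (i : ℕ))) =
      JT.D x n lam := by
    simp only [JT.D, hZh]
  rw [hD, hsum, ← finsum_mem_coe_finset]
  symm
  refine finsum_mem_eq_of_bijOn (fun T : SemistandardYoungTableau μ => (T : ℕ → ℕ → ℕ))
    ⟨?_, ?_, ?_⟩ ?_
  · intro T hT
    refine (hF _).2 ⟨?_, ?_, ?_, ?_⟩
    · exact fun hj hl => T.row_weak hj ((hmem _ _).2 hl)
    · exact fun hi hl => T.col_strict hi ((hmem _ _).2 hl)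
    · exact fun hl => T.zeros fun hc => absurd ((hmem _ _).1 hc) (not_lt.2 hl)
    · exact fun hl => hT _ _ ((hmem _ _).2 hl)
  · exact fun T _ U _ hTU => DFunLike.ext' hTU
  · intro T hT
    have hT' := (hF T).1 hT
    refine ⟨⟨T, fun hj hc => hT'.row hj ((hmem _ _).1 hc), fun hi hc => hT'.col hi ((hmem _ _).1 hc),
      fun hc => hT'.zeros (not_lt.1 fun hl => hc ((hmem _ _).2 hl))⟩, ?_, rfl⟩
    exact fun i j hc => hT'.lt ((hmem _ _).1 hc)
  · intro T hT
    have hcells : JT.wt x lam T = ∏ c ∈ μ.cells, x (T c.1 c.2) := by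
      rw [Finset.prod_finset_product μ.cells (Finset.range n) (fun i => Finset.range (JT.ext0 lam i))]
      · rw [JT.wt, Finset.prod_range]
        simp only [JT.ext0_val]
      · rintro ⟨i, j⟩
        rw [YoungDiagram.mem_cells, hmem, Finset.mem_range, Finset.mem_range]
        refine ⟨fun hj => ⟨?_, hj⟩, fun hj => hj.2⟩
        by_contra hi
        rw [JT.ext0_of_le lam (not_lt.1 hi)] at hj
        omega
    have hmaps : ∀ c ∈ μ.cells, T c.1 c.2 ∈ Finset.range n := fun c hc =>
      Finset.mem_range.2 (hT _ _ hc)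
    rw [hcells, ← Finset.prod_fiberwise_of_maps_to hmaps, Finset.prod_range]
    refine Finset.prod_congr rfl fun j _ => ?_
    rw [← hx j]
    symm
    refine Finset.prod_eq_pow_card fun c hc => ?_
    rw [(Finset.mem_filter.1 hc).2]
end

section
/- Schur's Pfaffian identity: let ℓ be a positive even integer. In the field ℚ(x_1,…,x_ℓ) of rational functions, ∏_{1≤i<j≤ℓ} (x_i − x_j)/(x_i + x_j) = Pf(M), where M is the ℓ×ℓ skew-symmetric matrix with entries M_{ij} = (x_i − x_j)/(x_i + x_j). -/
/-!
Expanding the Pfaffian along its first row gives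
`Pf(M) = ∑ₖ (-1)ᵏ M₀ₖ Pf(M with rows and columns 0, k removed)` (`pfaffian_succ`): a canonical
listing starts with the index `0`, followed by an arbitrary partner, followed by a canonical
listing of the remaining indices.  On the other side, the factors of the product that involve a
given index `k` can be split off at the cost of a sign `(-1)ᵏ` (`pairProd_succAbove`).
By induction on the size, the theorem reduces to the partial fraction expansion
`∏ⱼ (z - aⱼ)/(z + aⱼ) = ∑ₖ (z - aₖ)/(z + aₖ) ∏_{j ≠ k} (aₖ + aⱼ)/(aₖ - aⱼ)`
for an odd number of variables `aⱼ` (`prod_schur_eq_sum`).  This is Lagrange interpolation for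
`F(w) = (z - w) ∏ⱼ (w + aⱼ) + (z + w) ∏ⱼ (w - aⱼ)` at the nodes `0, a₀, a₁, …`, evaluated at
`w = -z`: the leading terms of `F` cancel, and `F(0) = 0` because the number of the `aⱼ` is odd.
-/

/-!
STATEMENT 9: Schur's Pfaffian identity.  For a positive even integer `ℓ = 2m`, in the field
of rational functions `ℚ(x_1, …, x_ℓ)` one has
`∏_{1 ≤ i < j ≤ ℓ} (x_i − x_j)/(x_i + x_j) = Pf(M)` where `M_{ij} = (x_i − x_j)/(x_i + x_j)`.
The Pfaffian is the signed sum over perfect matchings of `{1, …, ℓ}`; each perfect matching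
is encoded by its canonical listing permutation `σ` (with `σ(2r−1) < σ(2r)` for each pair
and `σ(1) < σ(3) < ⋯`), whose sign is the sign of the matching.
-/

open scoped Classical

/-- The field of rational functions `ℚ(x_1, …, x_ℓ)`. -/
abbrev RatField (ℓ : ℕ) := FractionRing (MvPolynomial (Fin ℓ) ℚ)

/-- The image of `x_i` in `ℚ(x_1, …, x_ℓ)`. -/
noncomputable def xv {ℓ : ℕ} (i : Fin ℓ) : RatField ℓ :=
  algebraMap (MvPolynomial (Fin ℓ) ℚ) (RatField ℓ) (MvPolynomial.X i)

/-! ### The partial fraction expansion -/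

/-- The matrix entry `(a - b)/(a + b)`. -/
def schurEntry {K : Type*} [Field K] (a b : K) : K := (a - b) / (a + b)

/-- Lagrange interpolation with the nodes other than `i` listed by `i.succAbove`. -/
lemma eval_eq_sum_succAbove {K : Type*} [Field K] {n : ℕ} (v : Fin (n + 1) → K)
    (hv : Function.Injective v) (f : Polynomial K) (hf : f.degree < ((n + 1 : ℕ) : WithBot ℕ))
    (w : K) :
    f.eval w = ∑ i, f.eval (v i) *
      ∏ j, (w - v (i.succAbove j)) / (v i - v (i.succAbove j)) := by
  have h := Lagrange.eq_interpolate (s := Finset.univ) (v := v) (f := f) hv.injOn (by simpa using hf)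
  conv_lhs => rw [h]
  rw [Lagrange.interpolate_apply, Polynomial.eval_finsetSum]
  refine Finset.sum_congr rfl fun i _ => ?_
  rw [Polynomial.eval_mul, Polynomial.eval_C, Lagrange.basis, Polynomial.eval_prod]
  congr 1
  have : (Finset.univ : Finset (Fin (n + 1))).erase i = Finset.univ.image i.succAbove := by
    rw [Fin.image_succAbove_univ]; ext; simp
  rw [this, Finset.prod_image (fun _ _ _ _ h => Fin.succAbove_right_injective h)]
  refine Finset.prod_congr rfl fun j _ => ?_
  simp [Lagrange.basisDivisor, div_eq_mul_inv, mul_comm]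

open Polynomial in
/-- The partial fraction expansion of `∏ⱼ (z - aⱼ)/(z + aⱼ)` in an odd number of variables
`aⱼ`. -/
lemma prod_schur_eq_sum {K : Type*} [Field K] {n : ℕ} (hn : Even n) (a : Fin (n + 1) → K) (z : K)
    (ha : Function.Injective a) (h2 : (2 : K) ≠ 0) (ha0 : ∀ i, a i ≠ 0) (hz0 : z ≠ 0)
    (hz : ∀ i, z + a i ≠ 0) :
    ∏ j, schurEntry z (a j) =
      ∑ k, schurEntry z (a k) * ∏ j, (schurEntry (a k) (a (k.succAbove j)))⁻¹ := by
  set P : K[X] := ∏ j, (X + C (a j)) with hP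
  set Q : K[X] := ∏ j, (X - C (a j)) with hQ
  have hPm : P.Monic := monic_prod_of_monic _ _ fun j _ => monic_X_add_C _
  have hQm : Q.Monic := monic_prod_of_monic _ _ fun j _ => monic_X_sub_C _
  have hPd : P.degree = ((n + 1 : ℕ) : WithBot ℕ) := by
    rw [hP, degree_prod]; simp
  have hQd : Q.degree = ((n + 1 : ℕ) : WithBot ℕ) := by
    rw [hQ, degree_prod]; simp
  set F : K[X] := (C z - X) * P + (C z + X) * Q with hF
  -- `X * P` and `X * Q` have degree `n + 2`, but their leading terms cancel.
  have hFd : F.degree < ((n + 1 + 1 : ℕ) : WithBot ℕ) := by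
    have e : F = C z * (P + Q) + X * (Q - P) := by rw [hF]; ring
    have lt1 : ((n + 1 : ℕ) : WithBot ℕ) < ((n + 1 + 1 : ℕ) : WithBot ℕ) := by
      exact_mod_cast Nat.lt_succ_self _
    rw [e]
    refine (degree_add_le _ _).trans_lt (max_lt ?_ ?_)
    · refine ((degree_C_mul hz0).trans_le (degree_add_le _ _)).trans_lt ?_
      rw [hPd, hQd, max_self]; exact lt1
    · have h := degree_sub_lt_left (hQd.trans hPd.symm) hQm.ne_zero
        (hQm.leadingCoeff.trans hPm.leadingCoeff.symm)
      rw [hQd, degree_lt_iff_coeff_zero] at h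
      rw [degree_lt_iff_coeff_zero]
      rintro (_ | k) hk
      · omega
      · rw [coeff_X_mul]
        exact h k (by omega)
  have hFa : ∀ k, F.eval (a k) = (z - a k) * (2 * a k * ∏ j, (a k + a (k.succAbove j))) := by
    intro k
    have hQ0 : Q.eval (a k) = 0 := by
      rw [hQ, eval_prod]
      exact Finset.prod_eq_zero (Finset.mem_univ k) (by simp)
    have hP0 : P.eval (a k) = 2 * a k * ∏ j, (a k + a (k.succAbove j)) := by
      rw [hP, eval_prod, Fin.prod_univ_succAbove _ k]
      simp [two_mul]
    simp [hF, hQ0, hP0]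
  have hF0 : F.eval 0 = 0 := by
    simp [hF, hP, hQ, eval_prod, Finset.prod_neg, hn.add_one.neg_one_pow]
  have hFz : F.eval (-z) = -(2 * z * ∏ j, (z - a j)) := by
    have hPz : P.eval (-z) = -∏ j, (z - a j) := by
      have e : ∀ j, -z + a j = -(z - a j) := fun j => by ring
      simp only [hP, eval_prod, eval_add, eval_X, eval_C, e, Finset.prod_neg, Finset.card_univ,
        Fintype.card_fin, hn.add_one.neg_one_pow, neg_one_mul]
    simp only [hF, eval_add, eval_mul, eval_sub, eval_C, eval_X, hPz]
    ring
  have hinj : Function.Injective (Fin.cons 0 a : Fin (n + 1 + 1) → K) := by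
    rw [Fin.cons_injective_iff]
    exact ⟨fun ⟨i, hi⟩ => ha0 i hi, ha⟩
  have key := eval_eq_sum_succAbove _ hinj F hFd (-z)
  rw [Fin.sum_univ_succ] at key
  simp only [Fin.cons_zero, hF0, zero_mul, zero_add, Fin.cons_succ, hFa,
    Fin.prod_univ_succ (n := n), Fin.succ_succAbove_zero, Fin.succ_succAbove_succ] at key
  rw [hFz] at key
  have hd : ∏ j, (z + a j) ≠ 0 := Finset.prod_ne_zero_iff.2 fun j _ => hz j
  have hc : -(2 * z) ≠ 0 := neg_ne_zero.2 (mul_ne_zero h2 hz0)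
  simp only [schurEntry, Finset.prod_div_distrib]
  rw [div_eq_iff hd, Finset.sum_mul]
  refine mul_left_cancel₀ hc ?_
  rw [neg_mul, key, Finset.mul_sum]
  refine Finset.sum_congr rfl fun k _ => ?_
  have hs : ∀ j, -z - a j = -(z + a j) := fun j => by ring
  rw [Fin.prod_univ_succAbove (fun j => z + a j) k]
  simp only [hs, Finset.prod_div_distrib, Finset.prod_neg, Finset.card_univ, Fintype.card_fin,
    hn.neg_one_pow, one_mul, inv_div]
  have h1 := ha0 k
  have h3 := hz k
  field_simp
  ring

/-! ### The product over pairs -/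

/-- The product of `(xᵢ - xⱼ)/(xᵢ + xⱼ)` over all pairs `i < j`. -/
def pairProd {K : Type*} [Field K] {n : ℕ} (x : Fin n → K) : K :=
  ∏ p ∈ (Finset.univ.filter fun p : Fin n × Fin n => p.1 < p.2),
    (x p.1 - x p.2) / (x p.1 + x p.2)

lemma pairProd_eq {K : Type*} [Field K] {n : ℕ} (x : Fin n → K) :
    pairProd x = ∏ i, ∏ j, if i < j then schurEntry (x i) (x j) else 1 := by
  rw [pairProd, Finset.prod_filter, ← Finset.univ_product_univ, Finset.prod_product]
  rfl

/-- The factors involving the index `k` split off; the `k` of them in which `k` is the larger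
index contribute a sign each. -/
lemma pairProd_succAbove {K : Type*} [Field K] {n : ℕ} (x : Fin (n + 1) → K) (k : Fin (n + 1)) :
    pairProd x = (-1) ^ (k : ℕ) * (∏ j, schurEntry (x k) (x (k.succAbove j))) *
      pairProd (fun i => x (k.succAbove i)) := by
  have hsgn : (-1 : K) ^ (k : ℕ) = ∏ j : Fin n, if (j : ℕ) < k then (-1 : K) else 1 := by
    simp [Finset.prod_ite, Fin.card_filter_val_lt, min_eq_right (Nat.lt_succ_iff.1 k.2)]
  rw [pairProd_eq, pairProd_eq, Fin.prod_univ_succAbove _ k, Fin.prod_univ_succAbove _ k]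
  simp only [Fin.prod_univ_succAbove _ k, lt_irrefl, if_false, one_mul,
    Finset.prod_mul_distrib, (Fin.strictMono_succAbove k).lt_iff_lt]
  rw [← mul_assoc, hsgn]
  simp only [← Finset.prod_mul_distrib]
  refine Finset.prod_congr rfl fun j _ => ?_
  congr 1
  have hj : k.succAbove j < k ↔ (j : ℕ) < k := by
    rw [Fin.succAbove_lt_iff_castSucc_lt]; rfl
  have hne := Fin.succAbove_ne k j
  by_cases h : (j : ℕ) < k
  · have h' := hj.2 h
    rw [if_neg h'.not_gt, if_pos h', if_pos h, schurEntry, schurEntry, add_comm (x k)]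
    ring
  · have h' : k < k.succAbove j := lt_of_le_of_ne (not_lt.1 (mt hj.1 h)) hne.symm
    rw [if_pos h', if_neg h'.not_gt, if_neg h]
    ring

/-! ### Expansion of the Pfaffian along the first row -/

/-- The permutation with `0 ↦ p` whose remaining values, in order, list the indices other than
`p` in the order prescribed by `e`. -/
def consPerm {n : ℕ} (p : Fin (n + 1)) (e : Equiv.Perm (Fin n)) : Equiv.Perm (Fin (n + 1)) :=
  p.cycleRange.symm * Equiv.Perm.decomposeFin.symm (0, e)

@[simp] lemma consPerm_zero {n : ℕ} (p : Fin (n + 1)) (e : Equiv.Perm (Fin n)) :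
    consPerm p e 0 = p := by
  simp [consPerm]

@[simp] lemma consPerm_succ {n : ℕ} (p : Fin (n + 1)) (e : Equiv.Perm (Fin n)) (j : Fin n) :
    consPerm p e j.succ = p.succAbove (e j) := by
  simp [consPerm]

lemma sign_consPerm {n : ℕ} (p : Fin (n + 1)) (e : Equiv.Perm (Fin n)) :
    Equiv.Perm.sign (consPerm p e) = (-1) ^ (p : ℕ) * Equiv.Perm.sign e := by
  simp [consPerm, Fin.sign_cycleRange]

lemma consPerm_bijective {n : ℕ} :
    Function.Bijective fun q : Fin (n + 1) × Equiv.Perm (Fin n) => consPerm q.1 q.2 := by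
  rw [Fintype.bijective_iff_injective_and_card]
  refine ⟨?_, Fintype.card_congr Equiv.Perm.decomposeFin.symm⟩
  rintro ⟨p, e⟩ ⟨p', e'⟩ h
  have h0 : p = p' := by simpa using DFunLike.congr_fun h 0
  subst h0
  have : e = e' := by
    ext1 j
    simpa using DFunLike.congr_fun h j.succ
  rw [this]

lemma sum_perm_succ {R : Type*} [AddCommMonoid R] {n : ℕ} (g : Equiv.Perm (Fin (n + 1)) → R) :
    ∑ σ, g σ = ∑ p, ∑ e, g (consPerm p e) := by
  rw [← consPerm_bijective.sum_comp g, Fintype.sum_prod_type]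

lemma two_mul_lt {m : ℕ} (r : Fin m) : 2 * (r : ℕ) < 2 * m := by omega

lemma two_mul_add_one_lt {m : ℕ} (r : Fin m) : 2 * (r : ℕ) + 1 < 2 * m := by omega

/-- `σ` is the canonical listing of a perfect matching: each pair is increasing, and the pairs
are ordered by their smaller elements. -/
def IsCanonical {m : ℕ} (σ : Equiv.Perm (Fin (2 * m))) : Prop :=
  (∀ r : Fin m, σ ⟨2 * (r : ℕ), two_mul_lt r⟩ < σ ⟨2 * (r : ℕ) + 1, two_mul_add_one_lt r⟩) ∧
    (∀ r s : Fin m, r < s → σ ⟨2 * (r : ℕ), two_mul_lt r⟩ < σ ⟨2 * (s : ℕ), two_mul_lt s⟩)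

/-- The Pfaffian of `f`, as a sum over canonical listings.  Only the entries `f i j` with `i < j`
occur. -/
noncomputable def pfaffian {R : Type*} [CommRing R] (m : ℕ)
    (f : Fin (2 * m) → Fin (2 * m) → R) : R :=
  ∑ σ ∈ (Finset.univ.filter fun σ : Equiv.Perm (Fin (2 * m)) => IsCanonical σ),
    ((Equiv.Perm.sign σ : ℤ) : R) *
      ∏ r : Fin m, f (σ ⟨2 * (r : ℕ), two_mul_lt r⟩) (σ ⟨2 * (r : ℕ) + 1, two_mul_add_one_lt r⟩)

/-- The listing `p, k, …` with remaining part `τ`, where `k` is numbered among the indices other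
than `p`. -/
def consPerm₂ {m : ℕ} (p : Fin (2 * m + 2)) (k : Fin (2 * m + 1)) (τ : Equiv.Perm (Fin (2 * m))) :
    Equiv.Perm (Fin (2 * (m + 1))) :=
  consPerm p (consPerm k τ)

section

variable {m : ℕ} (p : Fin (2 * m + 2)) (k : Fin (2 * m + 1)) (τ : Equiv.Perm (Fin (2 * m)))

lemma consPerm₂_zero (h : 2 * ((0 : Fin (m + 1)) : ℕ) < 2 * (m + 1)) :
    consPerm₂ p k τ ⟨2 * ((0 : Fin (m + 1)) : ℕ), h⟩ = p :=
  consPerm_zero p _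

lemma consPerm₂_one (h : 2 * ((0 : Fin (m + 1)) : ℕ) + 1 < 2 * (m + 1)) :
    consPerm₂ p k τ ⟨2 * ((0 : Fin (m + 1)) : ℕ) + 1, h⟩ = p.succAbove k :=
  (consPerm_succ p _ 0).trans (by rw [consPerm_zero])

lemma consPerm₂_even (r : Fin m) (h : 2 * (r.succ : ℕ) < 2 * (m + 1)) :
    consPerm₂ p k τ ⟨2 * (r.succ : ℕ), h⟩ =
      p.succAbove (k.succAbove (τ ⟨2 * (r : ℕ), two_mul_lt r⟩)) :=
  (consPerm_succ p _ (Fin.succ ⟨2 * (r : ℕ), two_mul_lt r⟩)).trans (by rw [consPerm_succ])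

lemma consPerm₂_odd (r : Fin m) (h : 2 * (r.succ : ℕ) + 1 < 2 * (m + 1)) :
    consPerm₂ p k τ ⟨2 * (r.succ : ℕ) + 1, h⟩ =
      p.succAbove (k.succAbove (τ ⟨2 * (r : ℕ) + 1, two_mul_add_one_lt r⟩)) :=
  (consPerm_succ p _ (Fin.succ ⟨2 * (r : ℕ) + 1, two_mul_add_one_lt r⟩)).trans (by rw [consPerm_succ])

end

/-- The first entry of a canonical listing is its least value. -/
lemma IsCanonical.apply_zero_le {m : ℕ} {σ : Equiv.Perm (Fin (2 * (m + 1)))} (h : IsCanonical σ)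
    (i : Fin (2 * (m + 1))) : σ ⟨2 * ((0 : Fin (m + 1)) : ℕ), two_mul_lt _⟩ ≤ σ i := by
  have h1 : ∀ r : Fin (m + 1), σ ⟨2 * ((0 : Fin (m + 1)) : ℕ), two_mul_lt _⟩ ≤
      σ ⟨2 * (r : ℕ), two_mul_lt r⟩ := by
    intro r
    rcases eq_or_ne r 0 with rfl | hr
    · exact le_rfl
    · exact (h.2 0 r (Fin.pos_of_ne_zero hr)).le
  have hi := i.2
  rcases Nat.even_or_odd' i.1 with ⟨c, hc | hc⟩
  · have : i = ⟨2 * ((⟨c, by omega⟩ : Fin (m + 1)) : ℕ), by omega⟩ := Fin.ext hc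
    rw [this]
    exact h1 _
  · have : i = ⟨2 * ((⟨c, by omega⟩ : Fin (m + 1)) : ℕ) + 1, by omega⟩ := Fin.ext hc
    rw [this]
    exact (h1 _).trans (h.1 _).le

lemma isCanonical_consPerm₂ {m : ℕ} (p : Fin (2 * m + 2)) (k : Fin (2 * m + 1))
    (τ : Equiv.Perm (Fin (2 * m))) :
    IsCanonical (consPerm₂ p k τ) ↔ p = 0 ∧ IsCanonical τ := by
  have hmono : ∀ i j, p.succAbove (k.succAbove i) < p.succAbove (k.succAbove j) ↔ i < j :=
    fun i j => by
      rw [(Fin.strictMono_succAbove p).lt_iff_lt, (Fin.strictMono_succAbove k).lt_iff_lt]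
  constructor
  · intro h
    refine ⟨?_, fun r => ?_, fun r s hrs => ?_⟩
    · have := h.apply_zero_le ((consPerm₂ p k τ).symm (0 : Fin (2 * m + 2)))
      rw [consPerm₂_zero, Equiv.apply_symm_apply] at this
      exact Fin.le_zero_iff.1 this
    · have := h.1 r.succ
      rw [consPerm₂_even, consPerm₂_odd] at this
      exact (hmono _ _).1 this
    · have := h.2 r.succ s.succ (Fin.succ_lt_succ_iff.2 hrs)
      rw [consPerm₂_even, consPerm₂_even] at this
      exact (hmono _ _).1 this
  · rintro ⟨rfl, h⟩
    refine ⟨fun r => ?_, fun r s hrs => ?_⟩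
    · cases r using Fin.cases with
      | zero =>
        rw [consPerm₂_zero, consPerm₂_one]
        exact Fin.succ_pos _
      | succ r =>
        rw [consPerm₂_even, consPerm₂_odd]
        exact (hmono _ _).2 (h.1 r)
    · cases s using Fin.cases with
      | zero => exact absurd hrs (Fin.not_lt_zero r)
      | succ s =>
        cases r using Fin.cases with
        | zero =>
          rw [consPerm₂_zero, consPerm₂_even]
          exact Fin.succ_pos _
        | succ r =>
          rw [consPerm₂_even, consPerm₂_even]
          exact (hmono _ _).2 (h.2 r s (Fin.succ_lt_succ_iff.1 hrs))

/-- Expansion along the first row.  Among the listings `p, k, …` exactly those with `p = 0` and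
canonical remaining part are canonical. -/
lemma pfaffian_succ {R : Type*} [CommRing R] (m : ℕ)
    (f : Fin (2 * m + 2) → Fin (2 * m + 2) → R) :
    pfaffian (m + 1) f = ∑ k : Fin (2 * m + 1), (-1) ^ (k : ℕ) * f 0 k.succ *
      pfaffian m fun i j => f (k.succAbove i).succ (k.succAbove j).succ := by
  have hsum : ∀ g : Equiv.Perm (Fin (2 * (m + 1))) → R,
      ∑ σ, g σ = ∑ p, ∑ k, ∑ τ, g (consPerm₂ p k τ) := by
    intro g
    refine (sum_perm_succ (n := 2 * m + 1) g).trans (Finset.sum_congr rfl fun p _ => ?_)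
    exact sum_perm_succ (n := 2 * m) _
  rw [pfaffian, Finset.sum_filter, hsum, Finset.sum_eq_single 0]
  · refine Finset.sum_congr rfl fun k _ => ?_
    rw [pfaffian, Finset.sum_filter, Finset.mul_sum]
    refine Finset.sum_congr rfl fun τ _ => ?_
    by_cases hτ : IsCanonical τ
    · rw [if_pos hτ, if_pos ((isCanonical_consPerm₂ _ _ _).2 ⟨rfl, hτ⟩), Fin.prod_univ_succ]
      have hs : Equiv.Perm.sign (consPerm₂ 0 k τ) = (-1) ^ (k : ℕ) * Equiv.Perm.sign τ := by
        refine (sign_consPerm (n := 2 * m + 1) 0 _).trans ?_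
        rw [sign_consPerm]; simp
      rw [hs, consPerm₂_zero, consPerm₂_one]
      simp only [consPerm₂_even, consPerm₂_odd, Fin.zero_succAbove]
      push_cast
      ring
    · rw [if_neg hτ, if_neg fun h => hτ ((isCanonical_consPerm₂ _ _ _).1 h).2, mul_zero]
  · intro p _ hp
    refine Finset.sum_eq_zero fun k _ => Finset.sum_eq_zero fun τ _ => ?_
    exact if_neg fun h => hp ((isCanonical_consPerm₂ _ _ _).1 h).1
  · simp

/-! ### The identity over a field -/

/-- Schur's identity for elements of any field at which no denominator vanishes and no two
variables coincide.  The case `i = j` of `hx` says that `xᵢ ≠ 0`. -/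
lemma pairProd_eq_pfaffian {K : Type*} [Field K] (h2 : (2 : K) ≠ 0) (m : ℕ) (x : Fin (2 * m) → K)
    (hinj : Function.Injective x) (hx : ∀ i j, x i + x j ≠ 0) :
    pairProd x = pfaffian m fun i j => schurEntry (x i) (x j) := by
  induction m with
  | zero =>
    have : ∀ σ : Equiv.Perm (Fin (2 * 0)), IsCanonical σ :=
      fun σ => ⟨fun r => r.elim0, fun r => r.elim0⟩
    have hE : IsEmpty (Fin (2 * 0)) := inferInstanceAs (IsEmpty (Fin 0))
    simp [pairProd_eq, pfaffian, this]
  | succ m ih =>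
    have h0 : ∀ i, x i ≠ 0 := fun i h => hx i i (by rw [h, add_zero])
    let y : Fin (2 * m + 2) → K := x
    let a : Fin (2 * m + 1) → K := fun i => y i.succ
    have ha : Function.Injective a := hinj.comp (Fin.succ_injective _)
    have hne : ∀ k j, schurEntry (a k) (a (k.succAbove j)) ≠ 0 := fun k j =>
      div_ne_zero (sub_ne_zero.2 fun h => Fin.succAbove_ne k j (ha h).symm) (hx _ _)
    refine Eq.trans ?_ (pfaffian_succ m _).symm
    have step : pairProd y = (∏ j, schurEntry (y 0) (a j)) * pairProd a := by
      simpa using pairProd_succAbove y 0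
    refine step.trans ?_
    rw [prod_schur_eq_sum (even_two_mul m) a (y 0) ha h2 (fun i => h0 _) (h0 _)
      (fun i => hx _ _), Finset.sum_mul]
    refine Finset.sum_congr rfl fun k _ => ?_
    rw [← ih (fun i => a (k.succAbove i)) (ha.comp Fin.succAbove_right_injective)
      (fun i j => hx _ _), pairProd_succAbove a k, Finset.prod_inv_distrib]
    have hp : ∏ j, schurEntry (a k) (a (k.succAbove j)) ≠ 0 :=
      Finset.prod_ne_zero_iff.2 fun j _ => hne k j
    change _ = (-1) ^ (k : ℕ) * schurEntry (y 0) (a k) * _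
    field_simp

lemma xv_injective {ℓ : ℕ} : Function.Injective (xv : Fin ℓ → RatField ℓ) :=
  (IsFractionRing.injective (MvPolynomial (Fin ℓ) ℚ) (RatField ℓ)).comp
    (MvPolynomial.X_injective)

lemma xv_add_ne_zero {ℓ : ℕ} (i j : Fin ℓ) : (xv i + xv j : RatField ℓ) ≠ 0 := by
  rw [xv, xv, ← map_add]
  intro h
  rw [IsFractionRing.to_map_eq_zero_iff] at h
  -- Setting every variable to `1` would give `2 = 0` in `ℚ`.
  have := congrArg (MvPolynomial.eval fun _ => (1 : ℚ)) h
  norm_num at this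

/-- (Schur's Pfaffian identity), with `ℓ = 2m`, `m ≥ 1`. -/
theorem schur_pfaffian_identity (m : ℕ) (hm : 1 ≤ m) :
    ∏ p ∈ (Finset.univ.filter fun p : Fin (2 * m) × Fin (2 * m) => p.1 < p.2),
        (xv p.1 - xv p.2) / (xv p.1 + xv p.2) =
    ∑ σ ∈ (Finset.univ.filter fun σ : Equiv.Perm (Fin (2 * m)) =>
        (∀ r : Fin m, σ ⟨2 * (r : ℕ), by omega⟩ < σ ⟨2 * (r : ℕ) + 1, by omega⟩) ∧
        (∀ r s : Fin m, r < s →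
          σ ⟨2 * (r : ℕ), by omega⟩ < σ ⟨2 * (s : ℕ), by omega⟩)),
      ((Equiv.Perm.sign σ : ℤ) : RatField (2 * m)) *
        ∏ r : Fin m,
          (xv (σ ⟨2 * (r : ℕ), by omega⟩) - xv (σ ⟨2 * (r : ℕ) + 1, by omega⟩)) /
            (xv (σ ⟨2 * (r : ℕ), by omega⟩) + xv (σ ⟨2 * (r : ℕ) + 1, by omega⟩)) := by
  refine (pairProd_eq_pfaffian two_ne_zero m xv xv_injective xv_add_ne_zero).trans ?_
  -- The two filters differ only in the decidability instance of the predicate.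
  refine Finset.sum_congr ?_ fun _ _ => rfl
  ext σ
  rw [Finset.mem_filter, Finset.mem_filter]
  rfl
end

section
/- Fix n ≥ 1. The subring of Γ[x_1,…,x_n] consisting of elements fixed by the ring endomorphisms s_0, s_1, …, s_{n−1} (the W_n-invariants) equals the polynomial subring ℤ[ⁿc_1, ⁿc_2, …] generated by the elements ⁿc_p := Σ_{j=0}^p c_{p−j} e_j(x_1,…,x_n) for p ≥ 1. -/
/-!
Write `B = Γ[x_1, …, x_n]` and let `A` be the subring generated by the `ⁿc_p`.

*`A` is invariant.*  In generating series, `N(t) = Σ ⁿc_p t^p = C(t) E(t)` with `C(t) = Σ c_p t^p`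
and `E(t) = ∏ (1 + x_i t)`.  Permutations fix both factors, while `s_0` multiplies `C(t)` by
`(1 + x_1 t) / (1 - x_1 t)` and `E(t)` by the inverse of this (`s0_gnc`).

*Invariants lie in `A`.*  Two facts about `B` are needed.

* `Γ` has no 2-torsion (`gamma_two_torsion`): modulo 2 the defining relations become the squares
  `c_p²`, and each `c_{k+1}²` is a nonzerodivisor modulo `(2, c_1², …, c_k²)`, which lets a
  factor 2 be cancelled one relation at a time.  Hence all differences of distinct elements among
  `±x_1, …, ±x_n` are nonzerodivisors in `B` (`signedX_sub_isLeftRegular`).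
* The relations say `C(t) C(-t) = 1`, so `N(t) N(-t) = E(t) E(-t) = ∏ (1 - x_i² t²)`; therefore
  the polynomial `∏ (T - x_i²)` has coefficients in `A` (`prod_X_sub_sq_coeff_mem`).

Put `A_k = A[x_{k+1}, …, x_n]`.  Then `A_0 = B` and `A_n = A`, and an invariant `f` is shown to lie
in every `A_k` by induction (`mem_ncX_succ`).  Dividing `∏ (T - x_i²)` by the factors with
`i > k + 1` leaves a monic polynomial over `A_{k+1}` of degree `k + 1` which vanishes at
`x_{k+1}²`, so `f = g(x_{k+1})` for some `g` over `A_{k+1}` of degree `< 2(k + 1)`.  For each sign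
and each `i ≤ k + 1` some element of the Weyl group fixes `A_{k+1}` and sends `x_{k+1}` to `±x_i`,
so `g(T) - f` has the `2(k + 1)` roots `±x_i`.  As the differences of the roots are
nonzerodivisors, `g(T) - f = 0`, and `f` is the constant coefficient of `g`.
-/

/-!
STATEMENT 12: Fix `n ≥ 1`.  The subring of `Γ[x_1, …, x_n]` of elements fixed by the ring
endomorphisms `s_0, s_1, …, s_{n−1}` (the `W_n`-invariants) equals the subring
`ℤ[ⁿc_1, ⁿc_2, …]` generated by the elements `ⁿc_p = Σ_{j=0}^p c_{p−j} e_j(x_1, …, x_n)`.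

`Γ` is the quotient of `ℤ[c_1, c_2, …]` by the ideal generated by
`c_p² + 2 Σ_{i=1}^p (−1)^i c_{p+i} c_{p−i}` for `p ≥ 1`.  The endomorphism `s_0` (which is
uniquely determined by its stated values on the generators `x_i` and `c_p`) is quantified
as a hypothesis; the `s_i` for `i ≥ 1` are the renamings along adjacent transpositions of
the variables.  Variables are 0-indexed: `x_1, …, x_n` are `X 0, …, X (n−1)`.
-/

open MvPolynomial

/-- The generator `c_p` of `ℤ[c_1, c_2, …]` (with `c_0 = 1`); `c_p` is the variable
`X (p − 1)` for `p ≥ 1`. -/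
noncomputable def cF : ℕ → MvPolynomial ℕ ℤ := fun p =>
  if p = 0 then 1 else X (p - 1)

/-- The defining relations of `Γ`. -/
noncomputable def gammaRelations : Set (MvPolynomial ℕ ℤ) :=
  {q | ∃ p : ℕ, 1 ≤ p ∧
    q = cF p ^ 2 + 2 * ∑ i ∈ Finset.Icc 1 p,
      (-1 : MvPolynomial ℕ ℤ) ^ i * (cF (p + i) * cF (p - i))}

/-- The ring `Γ`, isomorphic to the ring of Schur `Q`-functions. -/
abbrev GammaRing := MvPolynomial ℕ ℤ ⧸ Ideal.span gammaRelations

/-- The image of `c_p` in `Γ`. -/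
noncomputable def cq (p : ℕ) : GammaRing :=
  Ideal.Quotient.mk (Ideal.span gammaRelations) (cF p)

/-- The ring `Γ[x_1, …, x_n]`. -/
abbrev GammaX (n : ℕ) := MvPolynomial (Fin n) GammaRing

/-- The element `ⁿc_p = Σ_{j=0}^p c_{p−j} e_j(x_1, …, x_n)` of `Γ[x_1, …, x_n]`. -/
noncomputable def nc (n p : ℕ) : GammaX n :=
  ∑ j ∈ Finset.range (p + 1), C (cq (p - j)) * MvPolynomial.esymm (Fin n) GammaRing j


/-! ### The ring `Γ` has no 2-torsion -/

/-- The `p + 1`-st defining relation of `Γ`. -/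
noncomputable def gRel (p : ℕ) : MvPolynomial ℕ ℤ :=
  cF (p + 1) ^ 2 + 2 * ∑ i ∈ Finset.Icc 1 (p + 1),
      (-1 : MvPolynomial ℕ ℤ) ^ i * (cF (p + 1 + i) * cF (p + 1 - i))

/-- The ideal generated by the first `k` defining relations of `Γ`. -/
noncomputable def gIdeal (k : ℕ) : Ideal (MvPolynomial ℕ ℤ) := Ideal.span (gRel '' Set.Iio k)

/-- Reduction of coefficients modulo 2. -/
noncomputable def red2 : MvPolynomial ℕ ℤ →+* MvPolynomial ℕ (ZMod 2) :=
  MvPolynomial.map (Int.castRingHom (ZMod 2))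

lemma red2_surj : Function.Surjective red2 :=
  MvPolynomial.map_surjective _ (ZMod.ringHom_surjective _)

lemma red2_two : red2 2 = 0 := by
  rw [map_ofNat]
  exact CharTwo.two_eq_zero

lemma two_dvd_of_red2 {b : MvPolynomial ℕ ℤ} (h : red2 b = 0) : ∃ b', b = 2 * b' := by
  have := (MvPolynomial.C_dvd_iff_zmod 2 b).2 h
  obtain ⟨c, hc⟩ := this
  exact ⟨c, by simpa using hc⟩

lemma red2_gRel (p : ℕ) : red2 (gRel p) = monomial (Finsupp.single p 2) 1 := by
  simp only [gRel, map_add, map_mul, red2_two, zero_mul, add_zero, map_pow]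
  simp [cF, red2, X_pow_eq_monomial]

lemma map_gIdeal (k : ℕ) : (gIdeal k).map red2 =
    Ideal.span ((fun s => monomial s (1 : ZMod 2)) ''
      ((fun p => Finsupp.single p 2) '' Set.Iio k)) := by
  rw [gIdeal, Ideal.map_span, Set.image_image, Set.image_image]
  simp only [red2_gRel]

/-- `c_{k+1}²` is a nonzerodivisor modulo `(2, c_1², …, c_k²)`, by comparing monomials. -/
lemma gRel_regular_mod_two (k : ℕ) (b : MvPolynomial ℕ (ZMod 2))
    (hb : b * monomial (Finsupp.single k 2) 1 ∈ (gIdeal k).map red2) :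
    b ∈ (gIdeal k).map red2 := by
  rw [map_gIdeal, mem_ideal_span_monomial_image] at hb ⊢
  intro m hm
  have h1 : m + Finsupp.single k 2 ∈ (b * monomial (Finsupp.single k 2) (1 : ZMod 2)).support := by
    rw [mem_support_iff] at hm ⊢
    rwa [coeff_mul_monomial, mul_one]
  obtain ⟨_, ⟨p, hp, rfl⟩, hle⟩ := hb _ h1
  refine ⟨_, ⟨p, hp, rfl⟩, ?_⟩
  have hpk : p ≠ k := ne_of_lt hp
  rw [Finsupp.single_le_iff] at hle ⊢
  simpa [Finsupp.single_apply, hpk.symm] using hle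

/-- 2 is a nonzerodivisor modulo the first `k` relations.  If `2a = b R_{k+1} + i`, then `b` is
twice something modulo the first `k` relations, so 2 can be cancelled. -/
lemma gIdeal_two_torsion (k : ℕ) : ∀ a : MvPolynomial ℕ ℤ, 2 * a ∈ gIdeal k → a ∈ gIdeal k := by
  induction k with
  | zero =>
    intro a ha
    simpa [gIdeal] using ha
  | succ k ih =>
    intro a ha
    have hs : gIdeal (k + 1) = Ideal.span {gRel k} ⊔ gIdeal k := by
      rw [gIdeal, gIdeal, ← Ideal.span_union, ← Order.succ_eq_add_one, Order.Iio_succ_eq_insert,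
        Set.image_insert_eq, Set.insert_eq]
    rw [hs] at ha ⊢
    obtain ⟨b, i, hi, hbi⟩ := Ideal.mem_span_singleton_sup.1 ha
    have h1 : red2 b ∈ (gIdeal k).map red2 := by
      apply gRel_regular_mod_two
      have : red2 b * monomial (Finsupp.single k 2) 1 = - red2 i := by
        rw [← red2_gRel, ← map_mul, eq_neg_iff_add_eq_zero, ← map_add, hbi, map_mul, red2_two,
          zero_mul]
      rw [this]
      exact neg_mem (Ideal.mem_map_of_mem _ hi)
    obtain ⟨j, hj, hjb⟩ := (Ideal.mem_map_iff_of_surjective _ red2_surj).1 h1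
    obtain ⟨b', hb'⟩ := two_dvd_of_red2 (b := b - j) (by rw [map_sub, hjb, sub_self])
    have h2 : a - b' * gRel k ∈ gIdeal k := by
      apply ih
      have : 2 * (a - b' * gRel k) = j * gRel k + i := by
        linear_combination - hbi + gRel k * hb'
      rw [this]
      exact add_mem (Ideal.mul_mem_right _ _ hj) hi
    exact Ideal.mem_span_singleton_sup.2 ⟨b', _, h2, by ring⟩

lemma span_gammaRelations : Ideal.span gammaRelations = ⨆ k, gIdeal k := by
  simp only [gIdeal]
  rw [← Ideal.span_iUnion]
  congr 1
  ext q
  simp only [gammaRelations, Set.mem_ofPred_eq, Set.mem_iUnion, Set.mem_image, Set.mem_Iio]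
  constructor
  · rintro ⟨p, hp, rfl⟩
    obtain ⟨p, rfl⟩ := Nat.exists_eq_add_of_le' hp
    exact ⟨p + 1, p, Nat.lt_succ_self p, rfl⟩
  · rintro ⟨k, p, -, rfl⟩
    exact ⟨p + 1, by omega, rfl⟩

lemma gamma_two_torsion (a : GammaRing) (ha : 2 * a = 0) : a = 0 := by
  obtain ⟨a, rfl⟩ := Ideal.Quotient.mk_surjective a
  have hd : Directed (· ≤ ·) gIdeal := by
    apply Monotone.directed_le
    intro i j hij
    exact Ideal.span_mono (Set.image_mono (Set.Iio_subset_Iio hij))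
  have h2 : (2 : MvPolynomial ℕ ℤ) * a ∈ Ideal.span gammaRelations := by
    rw [← Ideal.Quotient.eq_zero_iff_mem, map_mul, map_ofNat]
    exact ha
  rw [Ideal.Quotient.eq_zero_iff_mem]
  rw [span_gammaRelations, Submodule.mem_iSup_of_directed _ hd] at h2 ⊢
  obtain ⟨k, hk⟩ := h2
  exact ⟨k, gIdeal_two_torsion k a hk⟩

lemma cq_zero : cq 0 = 1 := by simp [cq, cF]

lemma cq_rel (p : ℕ) (hp : 1 ≤ p) :
    cq p ^ 2 + 2 * ∑ i ∈ Finset.Icc 1 p, (-1 : GammaRing) ^ i * (cq (p + i) * cq (p - i)) = 0 := by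
  have h : cF p ^ 2 + 2 * ∑ i ∈ Finset.Icc 1 p,
      (-1 : MvPolynomial ℕ ℤ) ^ i * (cF (p + i) * cF (p - i)) ∈ Ideal.span gammaRelations :=
    Ideal.subset_span ⟨p, hp, rfl⟩
  have := Ideal.Quotient.eq_zero_iff_mem.2 h
  simpa [map_add, map_mul, map_sum, map_pow, map_ofNat, map_neg, map_one, cq] using this

lemma closure_cq : Subring.closure (Set.range cq) = ⊤ := by
  rw [eq_top_iff]
  rintro a -
  obtain ⟨a, rfl⟩ := Ideal.Quotient.mk_surjective a
  induction a using MvPolynomial.induction_on with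
  | C z => 
    have : (Ideal.Quotient.mk (Ideal.span gammaRelations)) (C z) = (z : GammaRing) := by simp
    rw [this]
    exact intCast_mem _ z
  | add p q hp hq => rw [map_add]; exact add_mem hp hq
  | mul_X p i hp =>
    rw [map_mul]
    exact mul_mem hp (Subring.subset_closure ⟨i + 1, by simp [cq, cF]⟩)

/-! ### Regular differences of the signed variables -/

section Generic

/-- A polynomial over any commutative ring with more roots than its degree vanishes, provided the
differences of the roots are nonzerodivisors. -/
lemma Polynomial.eq_zero_of_roots_regular {R ι : Type*} [CommRing R] (s : Finset ι) (r : ι → R)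
    (hr : ∀ i ∈ s, ∀ j ∈ s, i ≠ j → IsLeftRegular (r i - r j)) (p : Polynomial R)
    (hp : ∀ i ∈ s, p.eval (r i) = 0) (hdeg : p.degree < s.card) : p = 0 := by
  classical
  have key : ∏ i ∈ s, (Polynomial.X - Polynomial.C (r i)) ∣ p := by
    clear hdeg
    induction s using Finset.induction_on generalizing p with
    | empty => simp
    | insert a s ha ih =>
      obtain ⟨q, rfl⟩ := Polynomial.dvd_iff_isRoot.2 (hp a (Finset.mem_insert_self a s))
      rw [Finset.prod_insert ha]
      refine mul_dvd_mul_left _ (ih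
        (fun i hi j hj => hr i (Finset.mem_insert_of_mem hi) j (Finset.mem_insert_of_mem hj)) q
        fun i hi => ?_)
      have h := hp i (Finset.mem_insert_of_mem hi)
      rw [Polynomial.eval_mul, Polynomial.eval_sub, Polynomial.eval_X, Polynomial.eval_C] at h
      have hne : i ≠ a := fun e => ha (e ▸ hi)
      exact (hr i (Finset.mem_insert_of_mem hi) a (Finset.mem_insert_self a s) hne)
        (by simpa using h)
  nontriviality R
  have hm : (∏ i ∈ s, (Polynomial.X - Polynomial.C (r i))).Monic :=
    Polynomial.monic_prod_of_monic _ _ fun i _ => Polynomial.monic_X_sub_C _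
  by_contra h0
  refine hm.not_dvd_of_degree_lt h0 ?_ key
  rw [Polynomial.degree_eq_natDegree hm.ne_zero,
    Polynomial.natDegree_prod_of_monic _ _ fun i _ => Polynomial.monic_X_sub_C _]
  simpa using hdeg

/-- A quotient of polynomials over a subring `S` by a monic one again has coefficients in `S`. -/
lemma Polynomial.mem_lifts_of_mul_monic {B : Type*} [CommRing B] (S : Subring B)
    {P Q D : Polynomial B} (hD : D.Monic) (h : P = Q * D)
    (hP : P ∈ Polynomial.lifts S.subtype) (hDl : D ∈ Polynomial.lifts S.subtype) :
    Q ∈ Polynomial.lifts S.subtype := by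
  nontriviality B
  obtain ⟨P', hP'⟩ := (Polynomial.mem_lifts _).1 hP
  obtain ⟨D', hD', -, hDm⟩ := Polynomial.lifts_and_degree_eq_and_monic hDl hD
  refine (Polynomial.mem_lifts _).2 ⟨P' /ₘ D', ?_⟩
  rw [Polynomial.map_divByMonic _ hDm, hP', hD', h, mul_comm, Polynomial.mul_divByMonic_cancel_left _ hD]

lemma MvPolynomial.isLeftRegular_X_add_C_mul_X {σ G : Type*} [CommRing G] [DecidableEq σ]
    {i j : σ} (hij : i ≠ j) (u : G) :
    IsLeftRegular (X i + C u * X j : MvPolynomial σ G) := by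
  -- `X i ↦ X i - u X j` is an automorphism carrying `X i + u X j` to `X i`.
  let sub (v : G) : MvPolynomial σ G →ₐ[G] MvPolynomial σ G :=
    aeval fun l => if l = i then X i + C v * X j else X l
  have hinv : ∀ a, sub u (sub (-u) a) = a := by
    intro a
    have : (sub u).comp (sub (-u)) = AlgHom.id G _ := by
      apply MvPolynomial.algHom_ext
      intro l
      by_cases hl : l = i
      · subst hl
        simp [sub, hij.symm]
      · simp [sub, hl]
    exact DFunLike.congr_fun this a
  rw [isLeftRegular_iff_right_eq_zero_of_mul]
  intro a ha
  have h1 : X i * sub (-u) a = 0 := by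
    have := congrArg (sub (-u)) ha
    rw [map_mul, map_zero] at this
    rw [← this]
    congr 1
    simp [sub, hij.symm]
  rw [← hinv a, (isRegular_X.left.mul_left_eq_zero_iff).1 h1, map_zero]

lemma MvPolynomial.isLeftRegular_two {σ G : Type*} [CommRing G]
    (h2 : ∀ a : G, 2 * a = 0 → a = 0) : IsLeftRegular (2 : MvPolynomial σ G) := by
  rw [isLeftRegular_iff_right_eq_zero_of_mul]
  intro a ha
  ext m
  apply h2
  have := congrArg (coeff m) ha
  rwa [← map_ofNat (C (σ := σ) (R := G)) 2, coeff_C_mul, coeff_zero] at this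

/-- The signed variable `x_i` (for `(i, true)`) or `-x_i` (for `(i, false)`). -/
noncomputable def signedX {σ : Type*} (G : Type*) [CommRing G] (x : σ × Bool) : MvPolynomial σ G :=
  if x.2 then X x.1 else -X x.1

lemma signedX_sub_isLeftRegular {σ G : Type*} [CommRing G] 
    (h2 : ∀ a : G, 2 * a = 0 → a = 0) (x y : σ × Bool) (hxy : x ≠ y) :
    IsLeftRegular (signedX G x - signedX G y) := by
  classical
  obtain ⟨i, b⟩ := x
  obtain ⟨j, d⟩ := y
  have hneg : ∀ a : MvPolynomial σ G, IsLeftRegular a → IsLeftRegular (-a) := by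
    intro a ha p q h
    exact ha (by simpa using h)
  by_cases hij : i = j
  · subst hij
    have h2x : IsLeftRegular (2 * X i : MvPolynomial σ G) :=
      (isLeftRegular_two h2).mul isRegular_X.left
    cases b <;> cases d <;> simp only [ne_eq, not_true_eq_false] at hxy
    · convert hneg _ h2x using 1
      simp only [signedX]
      simp
      ring
    · convert h2x using 1
      simp only [signedX]
      simp
      ring
  · have hp := isLeftRegular_X_add_C_mul_X hij (1 : G)
    have hm := isLeftRegular_X_add_C_mul_X hij (-1 : G)
    cases b <;> cases d
    · convert hneg _ hm using 1
      simp [signedX]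
      ring
    · convert hneg _ hp using 1
      simp [signedX]
      ring
    · convert hp using 1
      simp [signedX]
    · convert hm using 1
      simp [signedX]
      ring

/-! ### Generating series -/

lemma PowerSeries.coeff_prod_one_add {R ι : Type*} [CommRing R] (s : Finset ι)
    (r : ι → R) (d m : ℕ) :
    PowerSeries.coeff m (∏ i ∈ s, (1 + PowerSeries.C (r i) * PowerSeries.X ^ d)) =
      ∑ t ∈ s.powerset with d * t.card = m, ∏ i ∈ t, r i := by
  rw [Finset.prod_one_add, map_sum, Finset.sum_filter]
  refine Finset.sum_congr rfl fun t _ => ?_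
  rw [Finset.prod_mul_distrib, Finset.prod_const, ← pow_mul, ← map_prod, PowerSeries.coeff_C_mul,
    PowerSeries.coeff_X_pow]
  by_cases h : d * t.card = m
  · simp [h]
  · simp [h, Ne.symm h]

lemma sum_Icc_one {M : Type*} [AddCommMonoid M] (f : ℕ → M) (p : ℕ) :
    ∑ i ∈ Finset.Icc 1 p, f i = ∑ i ∈ Finset.range p, f (i + 1) := by
  induction p with
  | zero => simp
  | succ p ih => rw [Finset.sum_Icc_succ_top (by omega), ih, Finset.sum_range_succ]

/- From here on `Γ` is replaced by an arbitrary commutative ring `G` with a sequence `c` having the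
properties of `Γ` that are used. -/
variable {G : Type*} [CommRing G] (c : ℕ → G)

/-- The coefficient form of `C(t) C(-t) = 1`.  In even degree this is the defining relation; in odd
degree the sum is antisymmetric, hence killed by 2. -/
lemma alternating_conv_eq_zero (h2 : ∀ a : G, 2 * a = 0 → a = 0)
    (hrel : ∀ p : ℕ, 1 ≤ p →
      c p ^ 2 + 2 * ∑ i ∈ Finset.Icc 1 p, (-1 : G) ^ i * (c (p + i) * c (p - i)) = 0)
    (m : ℕ) (hm : m ≠ 0) :
    ∑ x ∈ Finset.HasAntidiagonal.antidiagonal m, c x.1 * ((-1) ^ x.2 * c x.2) = 0 := by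
  rcases Nat.even_or_odd' m with ⟨p, rfl | rfl⟩
  · have hp : 1 ≤ p := by omega
    rw [Finset.Nat.sum_antidiagonal_eq_sum_range_succ (fun a b => c a * ((-1) ^ b * c b)),
      show (2 * p).succ = p + (p + 1) by omega, Finset.sum_range_add,
      Finset.sum_range_succ', ← Finset.sum_range_reflect]
    have hr := hrel p hp
    rw [sum_Icc_one] at hr
    have e1 : ∀ k ∈ Finset.range p,
        c (p - 1 - k) * ((-1) ^ (2 * p - (p - 1 - k)) * c (2 * p - (p - 1 - k))) =
        (-1) ^ p * ((-1 : G) ^ (k + 1) * (c (p + (k + 1)) * c (p - (k + 1)))) := by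
      intro k hk
      rw [Finset.mem_range] at hk
      rw [show 2 * p - (p - 1 - k) = p + (k + 1) by omega, show p - 1 - k = p - (k + 1) by omega,
        pow_add]
      ring
    have e2 : ∀ k ∈ Finset.range p,
        c (p + (k + 1)) * ((-1) ^ (2 * p - (p + (k + 1))) * c (2 * p - (p + (k + 1)))) =
        (-1) ^ p * ((-1 : G) ^ (k + 1) * (c (p + (k + 1)) * c (p - (k + 1)))) := by
      intro k hk
      rw [Finset.mem_range] at hk
      rw [show 2 * p - (p + (k + 1)) = p - (k + 1) by omega]
      have : (-1 : G) ^ p = (-1) ^ (p - (k + 1)) * (-1) ^ (k + 1) := by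
        rw [← pow_add]; congr 1; omega
      have h3 : ((-1 : G) ^ (k + 1)) * (-1) ^ (k + 1) = 1 := by
        rw [← mul_pow]; simp
      rw [this]
      linear_combination -(-1 : G) ^ (p - (k + 1)) * (c (p + (k + 1)) * c (p - (k + 1))) * h3
    rw [Finset.sum_congr rfl e1, Finset.sum_congr rfl e2, ← Finset.mul_sum]
    rw [show 2 * p - (p + 0) = p by omega, add_zero]
    linear_combination (-1) ^ p * hr
  · apply h2
    rw [two_mul]
    nth_rewrite 2 [← Finset.Nat.sum_antidiagonal_swap]
    rw [← Finset.sum_add_distrib]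
    refine Finset.sum_eq_zero fun x hx => ?_
    rw [Finset.HasAntidiagonal.mem_antidiagonal] at hx
    have : (-1 : G) ^ x.1 = - (-1) ^ x.2 := by
      have h3 : ((-1 : G) ^ x.2) * (-1) ^ x.2 = 1 := by
        rw [← mul_pow]; simp
      have h4 : ((-1 : G) ^ x.1) * (-1) ^ x.2 = -1 := by
        rw [← pow_add, hx]; exact Odd.neg_one_pow ⟨p, rfl⟩
      linear_combination (-1) ^ x.2 * h4 - (-1) ^ x.1 * h3
    simp only [Prod.fst_swap, Prod.snd_swap]
    rw [this]
    ring

/-- The element `ⁿc_p` for the sequence `c` in `G`. -/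
noncomputable def gnc (n p : ℕ) : MvPolynomial (Fin n) G :=
  ∑ j ∈ Finset.range (p + 1), C (c (p - j)) * MvPolynomial.esymm (Fin n) G j

/-- `C(t) = Σ c_p t^p`, over `G[x_1, …, x_n]`. -/
noncomputable def cSeries (n : ℕ) : PowerSeries (MvPolynomial (Fin n) G) :=
  PowerSeries.mk fun p => C (c p)

/-- `E(t) = ∏ (1 + x_i t)`. -/
noncomputable def eSeries (G : Type*) [CommRing G] (n : ℕ) :
    PowerSeries (MvPolynomial (Fin n) G) :=
  ∏ i : Fin n, (1 + PowerSeries.C (X i) * PowerSeries.X)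

/-- `N(t) = Σ ⁿc_p t^p`. -/
noncomputable def ncSeries (n : ℕ) : PowerSeries (MvPolynomial (Fin n) G) :=
  PowerSeries.mk fun p => gnc c n p

lemma coeff_eSeries (n m : ℕ) : PowerSeries.coeff m (eSeries G n) = esymm (Fin n) G m := by
  have := PowerSeries.coeff_prod_one_add Finset.univ (fun i : Fin n => (X i : MvPolynomial (Fin n) G)) 1 m
  rw [eSeries]
  simp only [pow_one, one_mul] at this
  rw [this, esymm, Finset.powersetCard_eq_filter]

lemma ncSeries_eq (n : ℕ) : ncSeries c n = cSeries c n * eSeries G n := by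
  ext1 m
  rw [mul_comm, PowerSeries.coeff_mul, Finset.Nat.sum_antidiagonal_eq_sum_range_succ
    (fun a b => PowerSeries.coeff a (eSeries G n) * PowerSeries.coeff b (cSeries c n))]
  simp only [ncSeries, PowerSeries.coeff_mk, gnc, cSeries, coeff_eSeries]
  exact Finset.sum_congr rfl fun j _ => mul_comm _ _

lemma coeff_evalNegHom {R : Type*} [CommRing R] (F : PowerSeries R) (m : ℕ) :
    PowerSeries.coeff m (PowerSeries.evalNegHom F) = (-1) ^ m * PowerSeries.coeff m F := by
  rw [PowerSeries.evalNegHom, PowerSeries.coeff_rescale]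

lemma cSeries_mul_neg (c0 : c 0 = 1) (h2 : ∀ a : G, 2 * a = 0 → a = 0)
    (hrel : ∀ p : ℕ, 1 ≤ p →
      c p ^ 2 + 2 * ∑ i ∈ Finset.Icc 1 p, (-1 : G) ^ i * (c (p + i) * c (p - i)) = 0) (n : ℕ) :
    cSeries c n * PowerSeries.evalNegHom (cSeries c n) = 1 := by
  ext1 m
  rw [PowerSeries.coeff_mul, PowerSeries.coeff_one]
  simp only [coeff_evalNegHom, cSeries, PowerSeries.coeff_mk]
  split_ifs with hm
  · subst hm; simp [c0]
  · have := congrArg (C (σ := Fin n)) (alternating_conv_eq_zero c h2 hrel m hm)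
    simpa [map_sum] using this

/-- `N(t) N(-t) = ∏ (1 - x_i² t²)`. -/
lemma ncSeries_mul_neg (c0 : c 0 = 1) (h2 : ∀ a : G, 2 * a = 0 → a = 0)
    (hrel : ∀ p : ℕ, 1 ≤ p →
      c p ^ 2 + 2 * ∑ i ∈ Finset.Icc 1 p, (-1 : G) ^ i * (c (p + i) * c (p - i)) = 0) (n : ℕ) :
    ncSeries c n * PowerSeries.evalNegHom (ncSeries c n) =
      ∏ i : Fin n, (1 + PowerSeries.C (-(X i : MvPolynomial (Fin n) G) ^ 2) * PowerSeries.X ^ 2) := by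
  rw [ncSeries_eq, map_mul, mul_mul_mul_comm, cSeries_mul_neg c c0 h2 hrel, one_mul, eSeries,
    map_prod, ← Finset.prod_mul_distrib]
  refine Finset.prod_congr rfl fun i _ => ?_
  have : PowerSeries.evalNegHom (PowerSeries.C (X i : MvPolynomial (Fin n) G)) =
      PowerSeries.C (X i) := by
    ext1 m
    rw [coeff_evalNegHom, PowerSeries.coeff_C]
    split_ifs with h <;> simp [h]
  rw [map_add, map_one, map_mul, PowerSeries.evalNegHom_X, this, map_neg, map_pow]
  ring

/-! ### The tower of subrings from the full ring down to the `ⁿc_p` -/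

/-- The subring `A` generated by the `ⁿc_p`, `p ≥ 1`. -/
noncomputable def ncSubring (n : ℕ) : Subring (MvPolynomial (Fin n) G) :=
  Subring.closure {g | ∃ p : ℕ, 1 ≤ p ∧ g = gnc c n p}

lemma gnc_mem (c0 : c 0 = 1) (n p : ℕ) : gnc c n p ∈ ncSubring c n := by
  rcases Nat.eq_zero_or_pos p with rfl | hp
  · simp [gnc, c0, one_mem]
  · exact Subring.subset_closure ⟨p, hp, rfl⟩

/-- The polynomial `∏ (T - x_i²)` has coefficients in `A`: they are the even coefficients of
`N(t) N(-t)`, in reverse order. -/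
lemma prod_X_sub_sq_coeff_mem (c0 : c 0 = 1) (h2 : ∀ a : G, 2 * a = 0 → a = 0)
    (hrel : ∀ p : ℕ, 1 ≤ p →
      c p ^ 2 + 2 * ∑ i ∈ Finset.Icc 1 p, (-1 : G) ^ i * (c (p + i) * c (p - i)) = 0) (n k : ℕ) :
    (∏ i : Fin n, (Polynomial.X + Polynomial.C (-(X i : MvPolynomial (Fin n) G) ^ 2))).coeff k ∈
      ncSubring c n := by
  have hE : ∀ m, PowerSeries.coeff m (∏ i : Fin n,
      (1 + PowerSeries.C (-(X i : MvPolynomial (Fin n) G) ^ 2) * PowerSeries.X ^ 2)) ∈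
      ncSubring c n := by
    intro m
    rw [← ncSeries_mul_neg c c0 h2 hrel, PowerSeries.coeff_mul]
    refine sum_mem fun x _ => ?_
    rw [coeff_evalNegHom]
    simp only [ncSeries, PowerSeries.coeff_mk]
    exact mul_mem (gnc_mem c c0 n _)
      (mul_mem (pow_mem (neg_mem (one_mem _)) _) (gnc_mem c c0 n _))
  by_cases hk : k ≤ n
  · rw [Finset.prod_X_add_C_coeff _ _ (by simpa using hk), Finset.powersetCard_eq_filter]
    have := hE (2 * (n - k))
    rw [PowerSeries.coeff_prod_one_add] at this
    simpa using this
  · nontriviality (MvPolynomial (Fin n) G)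
    rw [Polynomial.coeff_eq_zero_of_natDegree_lt]
    · exact zero_mem _
    · rw [Polynomial.natDegree_prod_of_monic _ _ fun i _ => Polynomial.monic_X_add_C _]
      simp only [Polynomial.natDegree_X_add_C]
      simpa using hk

/-- The subring `A_k` generated by the `ⁿc_p` and the variables `X j` with `k ≤ j`, that is (the
variables being indexed from 0) by all but the first `k` variables. -/
noncomputable def ncXSubring (n k : ℕ) : Subring (MvPolynomial (Fin n) G) :=
  Subring.closure ({g | ∃ p : ℕ, 1 ≤ p ∧ g = gnc c n p} ∪ {g | ∃ j : Fin n, k ≤ j ∧ g = X j})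

lemma ncSubring_le (n k : ℕ) : ncSubring c n ≤ ncXSubring c n k :=
  Subring.closure_mono Set.subset_union_left

lemma X_mem_ncX {n k : ℕ} (j : Fin n) (h : k ≤ j) : X j ∈ ncXSubring c n k :=
  Subring.subset_closure (Or.inr ⟨j, h, rfl⟩)

/-- `A_0` is everything: `c_p` is recovered recursively from `ⁿc_p` and the variables. -/
lemma ncX_zero (c0 : c 0 = 1) (hgen : Subring.closure (Set.range c) = ⊤) (n : ℕ) :
    ncXSubring c n 0 = ⊤ := by
  have hX : ∀ j : Fin n, X j ∈ ncXSubring c n 0 := fun j => X_mem_ncX c j (Nat.zero_le _)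
  have he : ∀ m, esymm (Fin n) G m ∈ ncXSubring c n 0 := fun m =>
    sum_mem fun t _ => prod_mem fun i _ => hX i
  have hc : ∀ p, C (c p) ∈ ncXSubring c n 0 := by
    intro p
    induction p using Nat.strong_induction_on with
    | _ p ih =>
      have h := ncSubring_le c n 0 (gnc_mem c c0 n p)
      rw [gnc, Finset.sum_range_succ'] at h
      have h' : ∑ k ∈ Finset.range p, C (c (p - (k + 1))) * esymm (Fin n) G (k + 1) ∈
          ncXSubring c n 0 :=
        sum_mem fun k hk => mul_mem (ih _ (by rw [Finset.mem_range] at hk; omega)) (he _)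
      simpa using sub_mem h h'
  have hC : ∀ a : G, C a ∈ ncXSubring c n 0 := by
    have : Subring.closure (Set.range c) ≤ (ncXSubring c n 0).comap C := by
      rw [Subring.closure_le]
      rintro _ ⟨p, rfl⟩
      exact hc p
    rw [hgen] at this
    exact fun a => this (Subring.mem_top a)
  rw [eq_top_iff]
  rintro f -
  induction f using MvPolynomial.induction_on with
  | C a => exact hC a
  | add p q hp hq => exact add_mem hp hq
  | mul_X p i hp => exact mul_mem hp (hX i)

lemma ncX_top (n : ℕ) : ncXSubring c n n = ncSubring c n := by
  rw [ncXSubring, ncSubring]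
  congr 1
  ext g
  simp only [Set.mem_union, Set.mem_ofPred_eq, or_iff_left_iff_imp]
  rintro ⟨j, hj, -⟩
  exact absurd j.2 (by omega)

lemma exists_poly_of_mem_ncX {n : ℕ} (k : Fin n) {f : MvPolynomial (Fin n) G}
    (hf : f ∈ ncXSubring c n k) :
    ∃ g : Polynomial (ncXSubring c n (k + 1)),
      g.eval₂ (ncXSubring c n (k + 1)).subtype (X k) = f := by
  have : ncXSubring c n k ≤
      (Polynomial.eval₂RingHom (ncXSubring c n (k + 1)).subtype (X k)).range := by
    rw [ncXSubring, Subring.closure_le]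
    rintro g (⟨p, hp, rfl⟩ | ⟨j, hj, rfl⟩)
    · have h : gnc c n p ∈ ncXSubring c n (k + 1) := Subring.subset_closure (Or.inl ⟨p, hp, rfl⟩)
      exact ⟨Polynomial.C ⟨_, h⟩, by simp⟩
    · rcases Nat.eq_or_lt_of_le hj with h | h
      · rw [← Fin.ext h]
        exact ⟨Polynomial.X, by simp⟩
      · exact ⟨Polynomial.C ⟨X j, X_mem_ncX c j h⟩, by simp⟩
  exact this hf

/-- The first `k + 1` factors of `∏ (T - x_i²)`, evaluated at `T²`: a monic polynomial over
`A_{k+1}` of degree `2(k + 1)` with root `X k`. -/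
lemma exists_monic_root [Nontrivial G] (c0 : c 0 = 1) (h2 : ∀ a : G, 2 * a = 0 → a = 0)
    (hrel : ∀ p : ℕ, 1 ≤ p →
      c p ^ 2 + 2 * ∑ i ∈ Finset.Icc 1 p, (-1 : G) ^ i * (c (p + i) * c (p - i)) = 0)
    {n : ℕ} (k : Fin n) :
    ∃ q : Polynomial (ncXSubring c n (k + 1)), q.Monic ∧ q.natDegree = (k + 1) * 2 ∧
      q.eval₂ (ncXSubring c n (k + 1)).subtype (X k) = 0 := by
  let L (i : Fin n) : Polynomial (MvPolynomial (Fin n) G) :=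
    Polynomial.X + Polynomial.C (-(X i : MvPolynomial (Fin n) G) ^ 2)
  have hLm : ∀ s : Finset (Fin n), (∏ i ∈ s, L i).Monic := fun s =>
    Polynomial.monic_prod_of_monic _ _ fun i _ => Polynomial.monic_X_add_C _
  have hP : ∏ i, L i ∈ Polynomial.lifts (ncXSubring c n (k + 1)).subtype := by
    rw [Polynomial.lifts_iff_coeff_lifts]
    intro m
    exact ⟨⟨_, ncSubring_le c n _ (prod_X_sub_sq_coeff_mem c c0 h2 hrel n m)⟩, rfl⟩
  have hD : ∏ i ∈ (Finset.Iic k)ᶜ, L i ∈ Polynomial.lifts (ncXSubring c n (k + 1)).subtype := by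
    refine prod_mem fun i hi => ?_
    have hi' : (k : ℕ) + 1 ≤ i := by
      simpa using hi
    exact (Polynomial.mem_lifts _).2 ⟨Polynomial.X + Polynomial.C
      (-(⟨X i, X_mem_ncX c i hi'⟩ : ncXSubring c n (k + 1)) ^ 2), by simp [L]⟩
  have hQ := Polynomial.mem_lifts_of_mul_monic _ (hLm _)
    (Finset.prod_mul_prod_compl (Finset.Iic k) L).symm hP hD
  obtain ⟨Q, hQmap, hQdeg, hQm⟩ := Polynomial.lifts_and_natDegree_eq_and_monic hQ (hLm _)
  refine ⟨Polynomial.expand _ 2 Q, hQm.expand (by norm_num), ?_, ?_⟩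
  · rw [Polynomial.natDegree_expand, hQdeg,
      Polynomial.natDegree_prod_of_monic _ _ fun i _ => Polynomial.monic_X_add_C _]
    simp [-map_neg]
  · rw [Polynomial.eval₂_eq_eval_map, Polynomial.map_expand, Polynomial.expand_eval, hQmap,
      Polynomial.eval_prod]
    exact Finset.prod_eq_zero (i := k) (by simp) (by simp [L])

/-- The inductive step: an element of `A_k` lies in `A_{k+1}` if it is fixed by enough
endomorphisms `w` over `A_{k+1}` to move `X k` to every `±X i` with `i ≤ k`. -/
lemma mem_ncX_succ [Nontrivial G] (c0 : c 0 = 1) (h2 : ∀ a : G, 2 * a = 0 → a = 0)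
    (hrel : ∀ p : ℕ, 1 ≤ p →
      c p ^ 2 + 2 * ∑ i ∈ Finset.Icc 1 p, (-1 : G) ^ i * (c (p + i) * c (p - i)) = 0)
    {n : ℕ} (k : Fin n) {f : MvPolynomial (Fin n) G}
    (hw : ∀ x : Fin n × Bool, x.1 ≤ k → ∃ w : MvPolynomial (Fin n) G →+* MvPolynomial (Fin n) G,
      w f = f ∧ (∀ p, w (gnc c n p) = gnc c n p) ∧ (∀ j, k < j → w (X j) = X j) ∧
      w (X k) = signedX G x)
    (hf : f ∈ ncXSubring c n k) : f ∈ ncXSubring c n (k + 1) := by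
  obtain ⟨g₀, hg₀⟩ := exists_poly_of_mem_ncX c k hf
  obtain ⟨q, hqm, hqd, hq0⟩ := exists_monic_root c c0 h2 hrel k
  set ι := (ncXSubring c n (k + 1)).subtype
  obtain ⟨g, hg, hgd⟩ : ∃ g : Polynomial (ncXSubring c n (k + 1)),
      g.eval₂ ι (X k) = f ∧ g.degree < ((k + 1) * 2 : ℕ) := by
    refine ⟨g₀ %ₘ q, ?_, ?_⟩
    · rw [Polynomial.eval₂_modByMonic_eq_self_of_root hq0, hg₀]
    · rw [← hqd, ← Polynomial.degree_eq_natDegree hqm.ne_zero]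
      exact Polynomial.degree_modByMonic_lt _ hqm
  have hzero : g.map ι - Polynomial.C f = 0 := by
    apply Polynomial.eq_zero_of_roots_regular (Finset.Iic k ×ˢ (Finset.univ : Finset Bool))
      (signedX G)
    · exact fun x _ y _ hxy => signedX_sub_isLeftRegular h2 x y hxy
    · intro x hx
      obtain ⟨w, hwf, hwc, hwX, hwk⟩ := hw x (by simpa using hx)
      have hfix : w.comp ι = ι := by
        have : ncXSubring c n (k + 1) ≤ w.eqLocus (RingHom.id _) := by
          rw [ncXSubring, Subring.closure_le]
          rintro _ (⟨p, -, rfl⟩ | ⟨j, hj, rfl⟩)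
          · exact hwc p
          · exact hwX j hj
        exact RingHom.ext fun a => this a.2
      have := congrArg w hg
      rw [Polynomial.hom_eval₂, hfix, hwk, hwf] at this
      rw [Polynomial.eval_sub, Polynomial.eval_C, Polynomial.eval_map, this, sub_self]
    · refine (Polynomial.degree_sub_le _ _).trans_lt (max_lt ?_ ?_)
      · refine Polynomial.degree_map_le.trans_lt (hgd.trans_le ?_)
        simp
      · refine Polynomial.degree_C_le.trans_lt ?_
        simp only [Finset.card_product, Fin.card_Iic]
        exact_mod_cast (by simp : 0 < ((k : ℕ) + 1) * _)
  have h0 := congrArg (fun p => Polynomial.coeff p 0) hzero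
  simp only [Polynomial.coeff_sub, Polynomial.coeff_map, Polynomial.coeff_C_zero,
    Polynomial.coeff_zero] at h0
  rw [← sub_eq_zero.1 h0]
  exact (g.coeff 0).2

end Generic

/-! ### The action of the hyperoctahedral group -/

section Action

variable {G : Type*} [CommRing G] (c : ℕ → G)

lemma rename_eq_of_adjacent {n : ℕ} {f : MvPolynomial (Fin n) G}
    (hf : ∀ i j : Fin n, (i : ℕ) + 1 = (j : ℕ) → rename (Equiv.swap i j) f = f)
    (σ : Equiv.Perm (Fin n)) : rename σ f = f := by
  cases n with
  | zero => rw [Subsingleton.elim σ (Equiv.refl _)]; simp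
  | succ m =>
    have hσ : σ ∈ Submonoid.closure
        (Set.range fun i : Fin m => Equiv.swap i.castSucc i.succ) := by
      rw [Equiv.Perm.mclosure_swap_castSucc_succ]; trivial
    induction hσ using Submonoid.closure_induction with
    | mem σ h =>
      obtain ⟨i, rfl⟩ := h
      exact hf _ _ (by simp)
    | one => simp
    | mul σ τ _ _ hσ hτ => rw [Equiv.Perm.coe_mul, ← rename_rename, hτ, hσ]

lemma rename_gnc (n p : ℕ) (σ : Equiv.Perm (Fin n)) : rename σ (gnc c n p) = gnc c n p := by
  simp [gnc, map_sum, rename_esymm]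

/-- `s_0` fixes `ⁿc_p`, since `s_0 C(t) · (1 - x_1 t) = C(t) · (1 + x_1 t)`. -/
lemma s0_gnc {n : ℕ} (hn : 1 ≤ n)
    (s0 : MvPolynomial (Fin n) G →+* MvPolynomial (Fin n) G)
    (hx1 : s0 (X ⟨0, hn⟩) = - X ⟨0, hn⟩) (hxj : ∀ j : Fin n, j ≠ ⟨0, hn⟩ → s0 (X j) = X j)
    (c0 : c 0 = 1)
    (hc : ∀ p : ℕ, 1 ≤ p → s0 (C (c p)) =
      C (c p) + 2 * ∑ j ∈ Finset.Icc 1 p, (X (⟨0, hn⟩ : Fin n)) ^ j * C (c (p - j)))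
    (p : ℕ) : s0 (gnc c n p) = gnc c n p := by
  set x : MvPolynomial (Fin n) G := X ⟨0, hn⟩
  have hc' : ∀ p, s0 (C (c p)) =
      C (c p) + 2 * ∑ j ∈ Finset.range p, x ^ (j + 1) * C (c (p - (j + 1))) := by
    intro p
    rcases Nat.eq_zero_or_pos p with rfl | hp
    · simp [c0]
    · rw [hc p hp, sum_Icc_one]
  have hrec : ∀ p, s0 (C (c (p + 1))) - x * s0 (C (c p)) = C (c (p + 1)) + x * C (c p) := by
    intro p
    rw [hc', hc', Finset.sum_range_succ']
    have : ∑ k ∈ Finset.range p, x ^ (k + 1 + 1) * C (c (p + 1 - (k + 1 + 1))) =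
        x * ∑ j ∈ Finset.range p, x ^ (j + 1) * C (c (p - (j + 1))) := by
      rw [Finset.mul_sum]
      refine Finset.sum_congr rfl fun k _ => ?_
      rw [show p + 1 - (k + 1 + 1) = p - (k + 1) by omega]
      ring
    rw [this, show p + 1 - (0 + 1) = p by omega]
    ring
  have hC : PowerSeries.map s0 (cSeries c n) * (1 + PowerSeries.C (-x) * PowerSeries.X) =
      cSeries c n * (1 + PowerSeries.C x * PowerSeries.X) := by
    ext1 m
    rw [mul_add, mul_add, mul_one, mul_one, mul_left_comm, mul_left_comm (cSeries c n), map_add,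
      map_add, PowerSeries.coeff_C_mul, PowerSeries.coeff_C_mul]
    cases m with
    | zero => simp [cSeries, c0]
    | succ m =>
      rw [PowerSeries.coeff_succ_mul_X, PowerSeries.coeff_succ_mul_X]
      simp only [PowerSeries.coeff_map, cSeries, PowerSeries.coeff_mk]
      linear_combination hrec m
  have hN : PowerSeries.map s0 (ncSeries c n) = ncSeries c n := by
    rw [ncSeries_eq, map_mul, eSeries, map_prod,
      ← Finset.mul_prod_erase _ _ (Finset.mem_univ (⟨0, hn⟩ : Fin n)),
      ← Finset.mul_prod_erase _ _ (Finset.mem_univ (⟨0, hn⟩ : Fin n)), ← mul_assoc, ← mul_assoc]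
    congr 1
    · rw [← hC, map_add, map_one, map_mul, PowerSeries.map_C, PowerSeries.map_X, hx1]
    · refine Finset.prod_congr rfl fun i hi => ?_
      rw [map_add, map_one, map_mul, PowerSeries.map_C, PowerSeries.map_X,
        hxj i (Finset.ne_of_mem_erase hi)]
  have := congrArg (PowerSeries.coeff p) hN
  simpa [ncSeries] using this

/-- Elements of the group generated by `s0` and the permutations that move `X k` to `±X i`, `i ≤ k`,
and fix the later variables. -/
lemma exists_signed_move {n : ℕ} (hn : 1 ≤ n)
    (s0 : MvPolynomial (Fin n) G →+* MvPolynomial (Fin n) G)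
    (hx1 : s0 (X ⟨0, hn⟩) = - X ⟨0, hn⟩) (hxj : ∀ j : Fin n, j ≠ ⟨0, hn⟩ → s0 (X j) = X j)
    {f : MvPolynomial (Fin n) G}
    (hσ : ∀ σ : Equiv.Perm (Fin n), rename σ f = f) (hs : s0 f = f)
    (hnc : ∀ p, s0 (gnc c n p) = gnc c n p) (k : Fin n) (x : Fin n × Bool) (hx : x.1 ≤ k) :
    ∃ w : MvPolynomial (Fin n) G →+* MvPolynomial (Fin n) G,
      w f = f ∧ (∀ p, w (gnc c n p) = gnc c n p) ∧ (∀ j, k < j → w (X j) = X j) ∧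
      w (X k) = signedX G x := by
  obtain ⟨i, b⟩ := x
  let T (σ : Equiv.Perm (Fin n)) : MvPolynomial (Fin n) G →+* MvPolynomial (Fin n) G :=
    (rename σ : MvPolynomial (Fin n) G →ₐ[G] MvPolynomial (Fin n) G).toRingHom
  have hT : ∀ σ a, T σ a = rename σ a := fun _ _ => rfl
  have hne : ∀ j, k < j → j ≠ i ∧ j ≠ k := fun j hj =>
    ⟨(lt_of_le_of_lt hx hj).ne', hj.ne'⟩
  cases b with
  | true =>
    refine ⟨T (Equiv.swap i k), by rw [hT, hσ], fun p => by rw [hT, rename_gnc],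
      fun j hj => ?_, ?_⟩
    · rw [hT, rename_X, Equiv.swap_apply_of_ne_of_ne (hne j hj).1 (hne j hj).2]
    · rw [hT, rename_X, Equiv.swap_apply_right]
      simp [signedX]
  | false =>
    -- Conjugating `s0` by the transposition of `0` and `i` changes the sign of `X i` alone.
    refine ⟨(T (Equiv.swap ⟨0, hn⟩ i)).comp
      (s0.comp ((T (Equiv.swap ⟨0, hn⟩ i)).comp (T (Equiv.swap i k)))), ?_, fun p => ?_,
      fun j hj => ?_, ?_⟩
    · simp only [RingHom.comp_apply, hT, hσ, hs]
    · simp only [RingHom.comp_apply, hT, rename_gnc, hnc]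
    · have hj0 : Equiv.swap ⟨0, hn⟩ i j ≠ ⟨0, hn⟩ := by
        intro h
        rw [Equiv.swap_apply_eq_iff, Equiv.swap_apply_left] at h
        exact (hne j hj).1 h
      simp only [RingHom.comp_apply, hT, rename_X,
        Equiv.swap_apply_of_ne_of_ne (hne j hj).1 (hne j hj).2, hxj _ hj0, Equiv.swap_apply_self]
    · simp only [RingHom.comp_apply, hT, rename_X, Equiv.swap_apply_right, hx1, map_neg,
        Equiv.swap_apply_left, signedX]
      simp

lemma mem_ncSubring_of_invariant {n : ℕ} (hn : 1 ≤ n)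
    (s0 : MvPolynomial (Fin n) G →+* MvPolynomial (Fin n) G)
    (hx1 : s0 (X ⟨0, hn⟩) = - X ⟨0, hn⟩) (hxj : ∀ j : Fin n, j ≠ ⟨0, hn⟩ → s0 (X j) = X j)
    (c0 : c 0 = 1) (h2 : ∀ a : G, 2 * a = 0 → a = 0)
    (hrel : ∀ p : ℕ, 1 ≤ p →
      c p ^ 2 + 2 * ∑ i ∈ Finset.Icc 1 p, (-1 : G) ^ i * (c (p + i) * c (p - i)) = 0)
    (hgen : Subring.closure (Set.range c) = ⊤)
    (hnc : ∀ p, s0 (gnc c n p) = gnc c n p) {f : MvPolynomial (Fin n) G}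
    (hσ : ∀ σ : Equiv.Perm (Fin n), rename σ f = f) (hs : s0 f = f) : f ∈ ncSubring c n := by
  cases subsingleton_or_nontrivial G
  · rw [Subsingleton.elim f 0]
    exact zero_mem _
  have key : ∀ k : ℕ, k ≤ n → f ∈ ncXSubring c n k := by
    intro k
    induction k with
    | zero => intro _; rw [ncX_zero c c0 hgen]; trivial
    | succ k ih =>
      intro hk
      exact mem_ncX_succ c c0 h2 hrel ⟨k, hk⟩
        (exists_signed_move c hn s0 hx1 hxj hσ hs hnc ⟨k, hk⟩) (ih (by omega))
  rw [← ncX_top]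
  exact key n le_rfl

end Action

/-- For any ring endomorphism `s0` of `Γ[x_1, …, x_n]` acting as the
reflection `s_0` on the generators (`x_1 ↦ −x_1`, `x_j ↦ x_j` for `j ≥ 2`, and
`c_p ↦ c_p + 2 Σ_{j=1}^p x_1^j c_{p−j}` for `p ≥ 1`), an element `f ∈ Γ[x_1, …, x_n]` is
invariant under `s0` and under all adjacent transpositions of the variables (the simple
reflections `s_1, …, s_{n−1}`) if and only if `f` lies in the subring generated by the
`ⁿc_p`, `p ≥ 1`. -/
theorem gammaX_invariants_eq_nc_subring (n : ℕ) (hn : 1 ≤ n)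
    (s0 : GammaX n →+* GammaX n)
    (hx1 : s0 (X ⟨0, hn⟩) = - X ⟨0, hn⟩)
    (hxj : ∀ j : Fin n, j ≠ ⟨0, hn⟩ → s0 (X j) = X j)
    (hc : ∀ p : ℕ, 1 ≤ p → s0 (C (cq p)) =
      C (cq p) + 2 * ∑ j ∈ Finset.Icc 1 p, (X (⟨0, hn⟩ : Fin n)) ^ j * C (cq (p - j)))
    (f : GammaX n) :
    ((∀ i j : Fin n, (i : ℕ) + 1 = (j : ℕ) →
        MvPolynomial.rename (Equiv.swap i j) f = f) ∧ s0 f = f) ↔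
      f ∈ Subring.closure {g : GammaX n | ∃ p : ℕ, 1 ≤ p ∧ g = nc n p} := by
  have hnc : ∀ p, s0 (gnc cq n p) = gnc cq n p := s0_gnc cq hn s0 hx1 hxj cq_zero hc
  constructor
  · rintro ⟨hf, hs⟩
    exact mem_ncSubring_of_invariant cq hn s0 hx1 hxj cq_zero gamma_two_torsion cq_rel closure_cq
      hnc (rename_eq_of_adjacent hf) hs
  · intro hf
    have h1 : ncSubring cq n ≤ s0.eqLocus (RingHom.id _) := by
      rw [ncSubring, Subring.closure_le]
      rintro _ ⟨p, -, rfl⟩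
      exact hnc p
    have h2 : ∀ σ : Equiv.Perm (Fin n), ncSubring cq n ≤
        RingHom.eqLocus (rename σ : GammaX n →ₐ[GammaRing] GammaX n).toRingHom
          (RingHom.id _) := by
      intro σ
      rw [ncSubring, Subring.closure_le]
      rintro _ ⟨p, -, rfl⟩
      exact rename_gnc cq n p σ
    exact ⟨fun i j _ => h2 (Equiv.swap i j) hf, h1 hf⟩
end
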